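/- For every integer n ≥ 0, the sixth symmetrized rank moment satisfies η₆(49n+47) ≡ 0 (mod 7). -/

import Mathlib

/-- The rank of a partition: its largest part minus its number of parts. -/
def partitionRank {n : ℕ} (P : Nat.Partition n) : ℤ :=
  (P.parts.sup : ℤ) - (P.parts.card : ℤ)

/-- `N(m,n)`: the number of partitions of `n` with rank `m`. -/
noncomputable def rankCount (m : ℤ) (n : ℕ) : ℕ :=
  Nat.card {P : Nat.Partition n // partitionRank P = m}

/-- The generalized binomial coefficient `C(x,k) = x(x-1)⋯(x-k+1)/k!` for an integer `x`. -/
def intChoose (x : ℤ) (k : ℕ) : ℤ :=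
  (∏ i ∈ Finset.range k, (x - (i : ℤ))) / (Nat.factorial k : ℤ)

/-- The sixth symmetrized rank moment `η₆(n) = Σ_{m∈ℤ} C(m+2,6)·N(m,n)`. -/
noncomputable def eta6 (n : ℕ) : ℤ :=
  ∑ᶠ m : ℤ, intChoose (m + 2) 6 * (rankCount m n : ℤ)


noncomputable section
open UpperHalfPlane ModularForm ModularFormClass MatrixGroups EisensteinSeries Function Complex
open scoped Manifold
/-- X d/dX -/
def thP {R : Type*} [CommRing R] (p : PowerSeries R) : PowerSeries R :=
  PowerSeries.mk fun n => (n : R) * PowerSeries.coeff n p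

def QE (f : ℍ → ℂ) (p : PowerSeries ℂ) : Prop :=
  ∀ τ : ℍ, HasSum (fun m ↦ PowerSeries.coeff m p • Periodic.qParam (1:ℝ) τ ^ m) (f τ)

lemma QE.sub {f g p r} (hf : QE f p) (hg : QE g r) : QE (f - g) (p - r) := by
  intro τ
  have := (hf τ).sub (hg τ)
  simpa [sub_mul] using this

lemma QE.smul {f p} (c : ℂ) (hf : QE f p) : QE (c • f) (PowerSeries.C c * p) := by
  intro τ
  have := (hf τ).mul_left c
  simpa [mul_assoc] using this

lemma QE.mul {f g p r} (hf : QE f p) (hg : QE g r) : QE (f * g) (p * r) := by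
  intro τ
  have h1 := (hf τ).summable.norm
  have h2 := (hg τ).summable.norm
  have h3 := tsum_mul_tsum_eq_tsum_sum_antidiagonal_of_summable_norm h1 h2
  rw [(hf τ).tsum_eq, (hg τ).tsum_eq] at h3
  have h4 := (summable_norm_sum_mul_antidiagonal_of_summable_norm h1 h2).of_norm.hasSum
  rw [← h3] at h4
  convert! h4 using 2 with n
  rw [PowerSeries.coeff_mul, Finset.sum_smul]
  refine Finset.sum_congr rfl fun kl hkl => ?_
  rw [Finset.HasAntidiagonal.mem_antidiagonal] at hkl
  simp only [smul_eq_mul]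
  rw [← hkl, pow_add]; ring

lemma QE.D {f p} (hf : QE f p) : QE (Derivative.normalizedDerivOfComplex f) (thP p) := by
  intro τ
  have hU : IsOpen {w : ℂ | τ.im / 2 < w.im} := isOpen_lt continuous_const Complex.continuous_im
  have hpos : 0 < τ.im / 2 := half_pos τ.im_pos
  let σ : ℍ := ⟨⟨0, τ.im/2⟩, hpos⟩
  have key := hasSum_deriv_of_summable_norm (F := fun (i : ℕ) (w : ℂ) => PowerSeries.coeff i p • Periodic.qParam (1:ℝ) w ^ i) (hf σ).summable.norm (U := {w : ℂ | τ.im / 2 < w.im})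
    ?_ hU ?_ (z := (τ:ℂ)) (by simpa using by linarith [τ.im_pos])
  · have e1 : deriv (fun w : ℂ => ∑' i, PowerSeries.coeff i p • Periodic.qParam (1:ℝ) w ^ i) (τ:ℂ) = deriv (f ∘ ofComplex) τ := by
      apply Filter.EventuallyEq.deriv_eq
      filter_upwards [isOpen_upperHalfPlaneSet.mem_nhds τ.2] with w hw
      have := (hf ⟨w, hw⟩).tsum_eq
      simp only [comp, ofComplex_apply_of_im_pos hw]
      exact this
    rw [e1] at key
    have := key.mul_left ((2 * Real.pi * Complex.I)⁻¹)
    unfold Derivative.normalizedDerivOfComplex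
    convert! this using 2 with n
    have hd : HasDerivAt (fun w : ℂ => PowerSeries.coeff n p • Periodic.qParam (1:ℝ) w ^ n)
        (PowerSeries.coeff n p * (n * Periodic.qParam (1:ℝ) τ ^ (n-1) * (Periodic.qParam (1:ℝ) τ * (2 * Real.pi * Complex.I)))) τ := by
      simp only [smul_eq_mul]
      apply HasDerivAt.const_mul
      have h0 : HasDerivAt (fun w : ℂ => Periodic.qParam (1:ℝ) w) (Periodic.qParam (1:ℝ) τ * (2 * Real.pi * Complex.I)) (τ:ℂ) := by
        unfold Periodic.qParam
        have : HasDerivAt (fun w : ℂ => 2 * Real.pi * Complex.I * w / (1:ℝ)) (2 * Real.pi * Complex.I) (τ:ℂ) := by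
          simpa using (hasDerivAt_id (τ:ℂ)).const_mul (2 * Real.pi * Complex.I)
        exact this.cexp
      exact h0.pow n
    rw [hd.deriv]
    simp only [thP, PowerSeries.coeff_mk, smul_eq_mul]
    have := two_pi_I_ne_zero
    cases n with
    | zero => simp
    | succ n => 
      simp only [Nat.add_sub_cancel]
      field_simp
      ring
  · intro i
    simp only [smul_eq_mul, Periodic.qParam]
    fun_prop
  · intro i w hw
    simp only [smul_eq_mul, norm_mul, norm_pow]
    gcongr
    rw [Periodic.norm_qParam, Periodic.norm_qParam]
    have : τ.im / 2 ≤ w.im := le_of_lt hw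
    simp only [Real.exp_le_exp]
    have h2 : ((σ:ℂ)).im = τ.im/2 := rfl
    rw [h2]
    have := Real.pi_pos
    simp only [div_one]
    nlinarith

lemma QE.eq_zero_of_modular {f : ℍ → ℂ} {p : PowerSeries ℂ} (k : ℕ) (hk : k < 12)
    (hf : MDiff f) (hs : ∀ γ : SL(2, ℤ), f ∣[(k:ℤ)] γ = f) (hp : QE f p)
    (h0 : PowerSeries.coeff 0 p = 0) : p = 0 := by
  have hb : IsBoundedAtImInfty f := isBoundedAtImInfty_of_hasSum_qExpansion one_pos hp
  let F : ModularForm 𝒮ℒ (k:ℤ) :=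
    { toFun := f
      slash_action_eq' := by
        rintro _ ⟨γ, rfl⟩
        exact hs γ
      holo' := hf
      bdd_at_cusps' := by
        intro c hc
        rw [OnePoint.isBoundedAt_iff_forall_SL2Z (by simpa using hc)]
        intro γ _
        have := hs γ
        change IsBoundedAtImInfty (f ∣[(k:ℤ)] γ)
        rw [this]
        exact hb }
  have hc : ∀ m, PowerSeries.coeff m p = (qExpansion 1 F).coeff m := fun m =>
    (ModularFormClass.qExpansion_coeff_unique (f := F) (c := fun m => PowerSeries.coeff m p) one_pos one_mem_strictPeriods_SL hp m)
  have hpe : p = qExpansion 1 F := PowerSeries.ext hc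
  have : F = 0 := by
    apply sturm_bound_levelOne_nat
    rw [Nat.div_eq_of_lt hk, ← hpe]
    rw [Nat.cast_zero, pos_iff_ne_zero]
    rw [PowerSeries.order_ne_zero_iff_constCoeff_eq_zero]
    simpa using h0
  rw [hpe, this]
  exact qExpansion_zero 1
end

noncomputable section
open UpperHalfPlane ModularForm ModularFormClass MatrixGroups EisensteinSeries Function Complex
open scoped Manifold
def Phi (k : ℕ) : PowerSeries ℤ := PowerSeries.mk fun n => (ArithmeticFunction.sigma k n : ℤ)

def cC : PowerSeries ℤ →+* PowerSeries ℂ := PowerSeries.map (Int.castRingHom ℂ)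

lemma cC_inj : Function.Injective cC := PowerSeries.map_injective _ Int.cast_injective

lemma thP_cC (p : PowerSeries ℤ) : thP (cC p) = cC (thP p) := by
  ext n; simp [thP, cC]

lemma coeff_cC (n : ℕ) (p : PowerSeries ℤ) : PowerSeries.coeff n (cC p) = ((PowerSeries.coeff n p : ℤ) : ℂ) := by
  simp [cC]

lemma coeff_ES (c : ℤ) (k n : ℕ) : PowerSeries.coeff n (1 + PowerSeries.C c * Phi k) =
    if n = 0 then 1 else c * ArithmeticFunction.sigma k n := by
  rcases n with _ | n
  · simp [Phi]
  · simp only [map_add, PowerSeries.coeff_C_mul, PowerSeries.coeff_one, Phi, PowerSeries.coeff_mk]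
    simp

lemma QE_E (k : ℕ) (hk : 3 ≤ k) (hk2 : Even k) (c : ℤ)
    (hc : -(2 * k / bernoulli k : ℂ) = c) :
    QE (E hk) (cC (1 + PowerSeries.C c * Phi (k - 1))) := by
  intro τ
  have := hasSum_qExpansion (f := E hk) one_pos (SlashInvariantFormClass.periodic_comp_ofComplex (E hk) one_mem_strictPeriods_SL) (ModularFormClass.holo _) (ModularFormClass.bdd_at_infty _) τ
  convert! this using 3 with m
  rw [E_qExpansion_coeff hk hk2, hc]
  rw [coeff_cC, coeff_ES]
  push_cast
  rfl

lemma QE_E4 : QE E₄ (cC (1 + PowerSeries.C 240 * Phi 3)) :=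
  QE_E 4 (by norm_num) ⟨2, rfl⟩ 240 (by norm_num [show bernoulli 4 = -1 / 30 by decide +kernel])
lemma QE_E6 : QE E₆ (cC (1 + PowerSeries.C (-504) * Phi 5)) :=
  QE_E 6 (by norm_num) ⟨3, rfl⟩ (-504) (by norm_num [show bernoulli 6 = 1 / 42 by decide +kernel])
lemma QE_E8 : QE (E (by norm_num : 3 ≤ 8)) (cC (1 + PowerSeries.C 480 * Phi 7)) :=
  QE_E 8 (by norm_num) ⟨4, rfl⟩ 480 (by norm_num [show bernoulli 8 = -1 / 30 by decide +kernel])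
lemma QE_E2 : QE E2 (cC (1 + PowerSeries.C (-24) * Phi 1)) := by
  intro τ
  have := hasSum_qExpansion_E2 (z := τ)
  simp only [Periodic.qParam, ofReal_one, div_one]
  convert! this using 3 with m
  rw [coeff_cC, coeff_ES]
  push_cast
  rfl

lemma slashE {k : ℤ} (f : ModularForm 𝒮ℒ k) (γ : SL(2, ℤ)) : (f : ℍ → ℂ) ∣[k] γ = f :=
  f.slash_action_eq' _ ⟨γ, rfl⟩

lemma serre_QE {f p} (k : ℂ) (hf : QE f p) : QE (Derivative.serreDerivative k f)
   (thP p - PowerSeries.C ((k:ℂ) * 12⁻¹) * (cC (1 + PowerSeries.C (-24) * Phi 1) * p)) := by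
  convert! (hf.D).sub ((QE_E2.mul hf).smul (k * 12⁻¹)) using 1
  ext z
  simp [Derivative.serreDerivative_apply, mul_assoc]

lemma E4sq_C : (cC (1 + PowerSeries.C 240 * Phi 3)) * (cC (1 + PowerSeries.C 240 * Phi 3)) 
    - cC (1 + PowerSeries.C 480 * Phi 7) = 0 := by
  refine QE.eq_zero_of_modular 8 (by norm_num) ?_ ?_ ((QE_E4.mul QE_E4).sub QE_E8) ?_
  · exact ((ModularFormClass.holo E₄).mul (ModularFormClass.holo E₄)).sub (ModularFormClass.holo _)
  · intro γ
    rw [sub_eq_add_neg, SlashAction.add_slash, SlashAction.neg_slash]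
    have := ModularForm.mul_slash_SL2 4 4 γ (E₄ : ℍ → ℂ) E₄
    rw [slashE] at this
    have h8 := slashE (E (by norm_num : 3 ≤ 8)) γ
    norm_num at this h8 ⊢
    rw [this, h8]
  · rw [map_sub, PowerSeries.coeff_mul]; simp only [Finset.Nat.antidiagonal_zero, Finset.sum_singleton, coeff_cC, coeff_ES]; norm_num

lemma serre_modular {k : ℕ} (f : ModularForm 𝒮ℒ (k : ℤ)) (g : ModularForm 𝒮ℒ ((k + 2 : ℕ) : ℤ)) (hk : k + 2 < 12)
    {p r : PowerSeries ℂ} (hf : QE f p) (hg : QE g r) (c : ℂ) (h0 : PowerSeries.coeff 0 (PowerSeries.C c * r) =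
     -((k:ℂ) * 12⁻¹) * PowerSeries.coeff 0 p) :
    thP p - PowerSeries.C ((k:ℂ) * 12⁻¹) * (cC (1 + PowerSeries.C (-24) * Phi 1) * p) - PowerSeries.C c * r = 0 := by
  refine QE.eq_zero_of_modular (k+2) hk ?_ ?_ ((serre_QE k hf).sub (hg.smul c)) ?_
  · exact (Derivative.serreDerivative_mdifferentiable _ (ModularFormClass.holo f)).sub ((ModularFormClass.holo g).const_smul c)
  · intro γ
    rw [sub_eq_add_neg, SlashAction.add_slash, SlashAction.neg_slash]
    have h1 := Derivative.serreDerivative_slash_invariant (ModularFormClass.holo f) (slashE f γ)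
    have h2 := slashE g γ
    rw [ModularForm.SL_smul_slash, h2]
    push_cast at h1 ⊢
    rw [h1]
  · rw [map_sub, h0]
    rw [map_sub, PowerSeries.coeff_C_mul, PowerSeries.coeff_mul]; simp only [Finset.Nat.antidiagonal_zero, Finset.sum_singleton, coeff_cC, coeff_ES, thP, PowerSeries.coeff_mk]; simp

lemma ram_b : (1 + 240 * Phi 3) ^ 2 = 1 + 480 * Phi 7 := by
  apply cC_inj
  have := E4sq_C
  rw [← map_mul, ← map_sub] at this
  have := sub_eq_zero.mp ((map_eq_zero_iff _ cC_inj).mp this)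
  simp only [map_ofNat] at this
  rw [← this]; ring_nf

lemma ram_c : 3 * thP (1 + 240 * Phi 3) = (1 - 24 * Phi 1) * (1 + 240 * Phi 3) - (1 - 504 * Phi 5) := by
  have h := serre_modular (k := 4) E₄ E₆ (by norm_num) QE_E4 QE_E6 (-1/3) (by rw [PowerSeries.coeff_C_mul]; simp only [coeff_cC, coeff_ES]; norm_num)
  apply cC_inj
  rw [thP_cC] at h
  have ha : (3 : PowerSeries ℂ) * PowerSeries.C (1/3:ℂ) = 1 := by
    rw [← map_ofNat (PowerSeries.C (R := ℂ)) 3, ← map_mul]; norm_num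
  have h1 : PowerSeries.C (((4:ℕ):ℂ) * 12⁻¹) = PowerSeries.C (1/3:ℂ) := by norm_num
  have h2 : PowerSeries.C (-1/3 : ℂ) = - PowerSeries.C (1/3:ℂ) := by rw [← map_neg]; norm_num
  rw [h1, h2] at h
  simp only [map_ofNat, map_neg, map_mul, map_add, map_sub, map_one] at h ⊢
  linear_combination 3 * h + ((1 - 24 * cC (Phi 1)) * (1 + 240 * cC (Phi 3)) - (1 - 504 * cC (Phi 5))) * ha

lemma ram_a : 2 * thP (1 - 504 * Phi 5) = (1 - 24 * Phi 1) * (1 - 504 * Phi 5) - (1 + 480 * Phi 7) := by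
  have h := serre_modular (k := 6) E₆ (E (by norm_num : 3 ≤ 8)) (by norm_num) QE_E6 QE_E8 (-1/2) (by rw [PowerSeries.coeff_C_mul]; simp only [coeff_cC, coeff_ES]; norm_num)
  apply cC_inj
  rw [thP_cC] at h
  have ha : (2 : PowerSeries ℂ) * PowerSeries.C (1/2:ℂ) = 1 := by
    rw [← map_ofNat (PowerSeries.C (R := ℂ)) 2, ← map_mul]; norm_num
  have h1 : PowerSeries.C (((6:ℕ):ℂ) * 12⁻¹) = PowerSeries.C (1/2:ℂ) := by norm_num
  have h2 : PowerSeries.C (-1/2 : ℂ) = - PowerSeries.C (1/2:ℂ) := by rw [← map_neg]; norm_num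
  rw [h1, h2] at h
  have h3 : thP (1 - 504 * Phi 5) = thP (1 + PowerSeries.C (-504) * Phi 5) := by
    congr 1; simp only [map_ofNat, map_neg]; ring
  rw [h3]
  simp only [map_ofNat, map_neg, map_mul, map_add, map_sub, map_one] at h ⊢
  linear_combination 2 * h + ((1 - 24 * cC (Phi 1)) * (1 - 504 * cC (Phi 5)) - (1 + 480 * cC (Phi 7))) * ha
end

noncomputable section
open PowerSeries
section th
variable {R : Type*} [CommRing R]
lemma coeff_thP (n : ℕ) (p : PowerSeries R) : coeff n (thP p) = n * coeff n p := by simp [thP]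
lemma thP_eq (p : PowerSeries R) : thP p = X * derivative R p := by
  ext n
  rw [coeff_thP]
  cases n with
  | zero => simp
  | succ n => rw [coeff_succ_X_mul, coeff_derivative]; push_cast; ring
lemma thP_add (p q : PowerSeries R) : thP (p + q) = thP p + thP q := by simp [thP_eq, mul_add]
lemma thP_sub (p q : PowerSeries R) : thP (p - q) = thP p - thP q := by simp [thP_eq, mul_sub]
lemma thP_neg (p : PowerSeries R) : thP (- p) = - thP p := by simp [thP_eq]
lemma thP_mul (p q : PowerSeries R) : thP (p * q) = thP p * q + p * thP q := by
  simp only [thP_eq, Derivation.leibniz, smul_eq_mul]; ring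
lemma thP_one : thP (1 : PowerSeries R) = 0 := by simp [thP_eq]
lemma thP_zero : thP (0 : PowerSeries R) = 0 := by simp [thP_eq]
lemma thP_ofNat (n : ℕ) [n.AtLeastTwo] : thP (ofNat(n) : PowerSeries R) = 0 := by
  have h : (ofNat(n) : PowerSeries R) = ((n : ℕ) : PowerSeries R) := (Nat.cast_ofNat).symm
  rw [h, thP_eq, Derivation.map_natCast, mul_zero]
lemma thP_pow (p : PowerSeries R) (n : ℕ) : thP (p ^ n) = n * p ^ (n - 1) * thP p := by
  simp only [thP_eq, Derivation.leibniz_pow, smul_eq_mul, nsmul_eq_mul]; ring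
lemma thP_map {S : Type*} [CommRing S] (f : R →+* S) (p : PowerSeries R) :
    thP (map f p) = map f (thP p) := by
  ext n; simp [coeff_thP]
lemma thP_sum {ι : Type*} (s : Finset ι) (f : ι → PowerSeries R) :
    thP (∑ i ∈ s, f i) = ∑ i ∈ s, thP (f i) := by simp [thP_eq, Finset.mul_sum]
end th

/-- partition series -/
def PP : PowerSeries ℤ := mk fun n => (Fintype.card (Nat.Partition n) : ℤ)

def m7 : PowerSeries ℤ →+* PowerSeries (ZMod 7) := map (Int.castRingHom (ZMod 7))
end

noncomputable section
open PowerSeries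
/-- 1/(q;q)_N -/
def qf : ℕ → PowerSeries ℤ
  | 0 => 1
  | N + 1 => qf N * PowerSeries.mk fun n => if (N + 1) ∣ n then 1 else 0

lemma geo_mul (i : ℕ) (hi : 0 < i) : (1 - X ^ i) * (PowerSeries.mk fun n => if i ∣ n then (1:ℤ) else 0) = 1 := by
  ext n
  rw [sub_mul, one_mul, map_sub, coeff_mk, coeff_X_pow_mul', coeff_one]
  by_cases h : i ≤ n
  · rw [if_pos h, coeff_mk, if_neg (by omega : n ≠ 0)]
    have : i ∣ n ↔ i ∣ n - i := by
      constructor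
      · intro hd; exact Nat.dvd_sub hd dvd_rfl
      · intro hd; have := Nat.dvd_add hd (dvd_refl i); rwa [Nat.sub_add_cancel h] at this
    by_cases hd : i ∣ n
    · rw [if_pos hd, if_pos (this.mp hd)]; simp
    · rw [if_neg hd, if_neg (fun h => hd (this.mpr h))]; simp
  · rw [if_neg h]
    by_cases h0 : n = 0
    · simp [h0]
    · rw [if_neg (fun hd => h (Nat.le_of_dvd (by omega) hd)), if_neg h0]; simp

lemma qf_succ (N : ℕ) : (1 - X ^ (N + 1)) * qf (N + 1) = qf N := by
  rw [qf]
  linear_combination qf N * geo_mul (N+1) (by omega)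

lemma qf_eventually (n : ℕ) : ∃ N0, ∀ N ≥ N0, coeff n (qf N) = coeff n PP := by
  letI : TopologicalSpace ℤ := ⊥
  haveI : DiscreteTopology ℤ := ⟨rfl⟩
  letI := PowerSeries.WithPiTopology.instTopologicalSpace ℤ
  have h := Nat.Partition.hasProd_powerSeriesMk_card_restricted ℤ (fun _ => True)
  have h2 : (fun i : ℕ => if True then ∑' j : ℕ, (X ^ ((i + 1) * j) : PowerSeries ℤ) else 1) =
     fun i => PowerSeries.mk fun n => if (i+1) ∣ n then (1:ℤ) else 0 := by
    funext i
    simp only [if_true]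
    have h3 := WithPiTopology.tsum_pow_mul_one_sub_of_constantCoeff_eq_zero (R := ℤ) (f := X ^ (i+1)) (by simp)
    have h4 := geo_mul (i+1) (by omega)
    simp only [← pow_mul] at h3
    calc (∑' j : ℕ, (X ^ ((i + 1) * j) : PowerSeries ℤ)) = (∑' j : ℕ, (X ^ ((i + 1) * j) : PowerSeries ℤ)) * ((1 - X ^ (i+1)) * (PowerSeries.mk fun n => if (i+1) ∣ n then (1:ℤ) else 0)) := by rw [h4, mul_one]
      _ = _ := by rw [← mul_assoc, h3, one_mul]
  rw [h2] at h
  have h5 := h.tendsto_prod_nat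
  rw [WithPiTopology.tendsto_iff_coeff_tendsto] at h5
  have h6 := h5 n
  rw [nhds_discrete, Filter.tendsto_pure, Filter.eventually_atTop] at h6
  obtain ⟨N0, h7⟩ := h6
  refine ⟨N0, fun N hN => ?_⟩
  have h8 : qf N = ∏ i ∈ Finset.range N, PowerSeries.mk fun n => if (i+1) ∣ n then (1:ℤ) else 0 := by
    clear hN
    induction N with
    | zero => rfl
    | succ N ih => rw [Finset.prod_range_succ, ← ih]; rfl
  rw [h8, h7 N hN]
  simp [PP, Nat.Partition.restricted]

lemma qf_eventually_le (n : ℕ) : ∃ N0, ∀ N ≥ N0, ∀ m ≤ n, coeff m (qf N) = coeff m PP := by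
  choose f hf using qf_eventually
  refine ⟨(Finset.range (n+1)).sup f, fun N hN m hm => hf m N (le_trans (Finset.le_sup (f := f) (Finset.mem_range.mpr (by omega))) hN)⟩

lemma thP_qf (N : ℕ) : thP (qf N) = qf N * ∑ i ∈ Finset.range N, PowerSeries.mk fun n => if (i+1) ∣ n ∧ n ≠ 0 then ((i+1 : ℕ):ℤ) else 0 := by
  induction N with
  | zero => simp [qf, thP_one]
  | succ N ih =>
    rw [qf, thP_mul, ih, Finset.sum_range_succ]
    have h1 := geo_mul (N+1) (by omega)
    set g : PowerSeries ℤ := PowerSeries.mk fun n => if (N+1) ∣ n then (1:ℤ) else 0 with hg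
    have h2 : (PowerSeries.mk fun n => if (N+1) ∣ n ∧ n ≠ 0 then ((N+1 : ℕ):ℤ) else 0) = (N+1 : PowerSeries ℤ) * X^(N+1) * g := by
      have : (N+1 : PowerSeries ℤ) * X^(N+1) * g = (N+1 : PowerSeries ℤ) * (g - 1) := by linear_combination -(N+1 : PowerSeries ℤ) * h1
      rw [this]
      ext n
      have hc : (N+1 : PowerSeries ℤ) = C ((N+1 : ℕ) : ℤ) := by simp
      rw [hc, coeff_C_mul, map_sub, coeff_one, hg, coeff_mk, coeff_mk]
      by_cases h0 : n = 0
      · simp [h0]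
      · by_cases hd : (N+1) ∣ n <;> simp [h0, hd]
    have h3 : thP g = g * ((N+1 : PowerSeries ℤ) * X^(N+1) * g) := by
      have h4 := congrArg thP h1
      rw [thP_mul, thP_one, thP_sub, thP_one, thP_pow] at h4
      have h5 : thP (X : PowerSeries ℤ) = X := by rw [thP_eq, derivative_X, mul_one]
      rw [h5] at h4
      push_cast at h4
      linear_combination g * h4 - thP g * h1
    rw [h2, h3]; ring

lemma thPP : thP PP = PP * Phi 1 := by
  ext n
  obtain ⟨N0, h⟩ := qf_eventually_le n
  have h1 := congrArg (coeff n) (thP_qf (N0 + n))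
  rw [coeff_thP, h _ (by omega) n le_rfl] at h1
  rw [coeff_thP, h1, coeff_mul, coeff_mul]
  refine Finset.sum_congr rfl fun ij hij => ?_
  have hij' := Finset.HasAntidiagonal.mem_antidiagonal.mp hij
  rw [h _ (by omega) ij.1 (by omega)]
  congr 1
  rw [map_sum]
  simp only [Phi, coeff_mk, ArithmeticFunction.sigma_apply, pow_one]
  by_cases h0 : ij.2 = 0
  · simp [h0]
  · simp only [h0, ne_eq, not_false_eq_true, and_true]
    rw [← Finset.sum_filter]
    push_cast
    symm
    refine Finset.sum_bij (fun d _ => d - 1) ?_ ?_ ?_ ?_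
    · intro d hd
      have := Nat.pos_of_mem_divisors hd
      have := Nat.divisor_le hd
      simp only [Finset.mem_filter, Finset.mem_range]
      rw [Nat.sub_add_cancel (by omega)]
      exact ⟨by omega, Nat.dvd_of_mem_divisors hd⟩
    · intro a ha b hb hab
      have := Nat.pos_of_mem_divisors ha
      have := Nat.pos_of_mem_divisors hb
      omega
    · intro b hb
      simp only [Finset.mem_filter, Finset.mem_range] at hb
      exact ⟨b + 1, Nat.mem_divisors.mpr ⟨hb.2, h0⟩, rfl⟩
    · intro d hd
      have := Nat.pos_of_mem_divisors hd
      omega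
end

noncomputable section
open PowerSeries
instance : Fact (Nat.Prime 7) := ⟨by norm_num⟩
abbrev Z7 := PowerSeries (ZMod 7)
lemma h7Z : (7 : Z7) = 0 := by
  have h : (7 : Z7) = C (7 : ZMod 7) := (map_ofNat (C (R := ZMod 7)) 7).symm
  rw [h, show (7 : ZMod 7) = 0 from rfl, map_zero]

lemma ofNat_map (n : ℕ) [n.AtLeastTwo] : m7 (ofNat(n)) = (ofNat(n) : Z7) := map_ofNat m7 n

lemma coeff_m7 (n : ℕ) (p : PowerSeries ℤ) : coeff n (m7 p) = ((coeff n p : ℤ) : ZMod 7) := by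
  simp [m7]
lemma m7_thP (p : PowerSeries ℤ) : m7 (thP p) = thP (m7 p) := (thP_map _ _).symm

lemma phi71 : m7 (Phi 7) = m7 (Phi 1) := by
  ext n
  simp only [coeff_m7, Phi, coeff_mk, ArithmeticFunction.sigma_apply]
  push_cast
  refine Finset.sum_congr rfl fun d _ => ?_
  rw [pow_one]
  exact ZMod.pow_card (p := 7) (d : ZMod 7)


def QQ : Z7 := 1 + 2 * m7 (Phi 3)

lemma QQ_sq : QQ ^ 2 = 1 + 4 * m7 (Phi 1) := by
  have h := congrArg m7 ram_b
  simp only [map_pow, map_add, map_mul, map_one, ofNat_map, phi71] at h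
  rw [QQ]
  linear_combination h + (68 * m7 (Phi 1) - 68 * m7 (Phi 3) - 8228 * m7 (Phi 3)^2) * h7Z

lemma QQ_th : thP QQ = 5 * (QQ ^ 3 - 1) := by
  have h := congrArg m7 ram_c
  simp only [map_pow, map_add, map_mul, map_one, ofNat_map, map_sub, m7_thP] at h
  simp only [thP_add, thP_mul, thP_one, thP_ofNat, zero_mul, zero_add] at h
  have h2 := QQ_sq
  have e1 : QQ ^ 3 = (1 + 4 * m7 (Phi 1)) * QQ := by rw [← h2]; ring
  rw [e1, QQ]
  simp only [thP_add, thP_mul, thP_one, thP_ofNat, zero_mul, zero_add]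
  generalize m7 (Phi 1) = a at *
  generalize m7 (Phi 3) = b at *
  generalize m7 (Phi 5) = c at *
  generalize thP b = t at *
  linear_combination 5 * h + (-514*t + 170*b+ 360*c - 20 *a - 4120 *a*b) * h7Z

lemma phi3_eq : m7 (Phi 3) = 4 * (QQ - 1) := by
  rw [QQ]; linear_combination (-m7 (Phi 3)) * h7Z
lemma phi1_eq : m7 (Phi 1) = 2 * (QQ^2 - 1) := by
  rw [QQ_sq]; linear_combination (-m7 (Phi 1)) * h7Z

def TT : PowerSeries ℤ := (1 + 240 * Phi 3) ^ 3 - (1 - 504 * Phi 5) ^ 2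

lemma TT_th : thP (TT * PP ^ 24) = TT * PP ^ 24 := by
  have h1 : thP TT = (1 - 24 * Phi 1) * TT := by
    rw [TT, thP_sub, thP_pow, thP_pow]
    push_cast
    linear_combination (1 + 240 * Phi 3) ^ 2 * ram_c - (1 - 504 * Phi 5) * ram_a - (1 - 504 * Phi 5) * ram_b
  rw [thP_mul, thP_pow, thPP, h1]
  push_cast
  ring

lemma coeff0_Phi (k : ℕ) : constantCoeff (Phi k) = 0 := by
  rw [← coeff_zero_eq_constantCoeff_apply, Phi, coeff_mk]; simp
lemma coeff1_Phi (k : ℕ) : coeff 1 (Phi k) = 1 := by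
  simp [Phi]
lemma coeff0_PP : constantCoeff PP = 1 := by
  rw [← coeff_zero_eq_constantCoeff_apply, PP, coeff_mk]; simp

lemma Phi_X (k : ℕ) : ∃ F : PowerSeries ℤ, Phi k = X + X^2 * F := by
  have h : (X : PowerSeries ℤ)^2 ∣ Phi k - X := by
    rw [X_pow_dvd_iff]
    intro m hm
    interval_cases m
    · simp [coeff0_Phi]
    · simp [coeff1_Phi, coeff_one_X]
  obtain ⟨F, hF⟩ := h
  exact ⟨F, by rw [← hF]; ring⟩

lemma TT_eq : TT * PP ^ 24 = 1728 * X := by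
  obtain ⟨F, hF⟩ := Phi_X 3
  obtain ⟨G, hG⟩ := Phi_X 5
  have h := TT_th
  have e : (1728 : PowerSeries ℤ) = C 1728 := by simp
  ext n
  by_cases hn : n = 1
  · subst hn
    have e1 : ∃ H, TT = X * (1728 + X * H) := by
      refine ⟨3*240*F + 2*504*G + 3*240^2*(1+X*F)^2 + X*240^3*(1+X*F)^3 - 504^2*(1+X*G)^2, ?_⟩
      rw [TT, hF, hG]; ring
    obtain ⟨H, hH⟩ := e1
    rw [hH, mul_assoc, show (1:ℕ) = 0 + 1 from rfl, coeff_succ_X_mul, coeff_succ_mul_X]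
    simp [coeff0_PP]
  · have h2 := congrArg (coeff n) h
    rw [coeff_thP] at h2
    rw [e, coeff_C_mul, coeff_X, if_neg hn, mul_zero]
    have h3 : ((n:ℤ) - 1) * coeff n (TT * PP ^ 24) = 0 := by linear_combination h2
    rcases mul_eq_zero.mp h3 with h4 | h4
    · omega
    · exact h4

def P7 : Z7 := m7 PP

lemma D_eq : (QQ ^ 3 - 1) * P7 ^ 24 = - X := by
  have h := congrArg m7 TT_eq
  have hx : m7 X = X := by simp [m7]
  rw [TT] at h
  simp only [map_pow, map_add, map_mul, map_one, ofNat_map, map_sub, hx] at h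
  rw [P7]
  have e : (1 + 240 * m7 (Phi 3) : Z7) = QQ := by rw [QQ]; linear_combination (34 * m7 (Phi 3)) * h7Z
  have e2 : (1 - 504 * m7 (Phi 5) : Z7) = 1 := by linear_combination (-72 * m7 (Phi 5)) * h7Z
  rw [e, e2] at h
  linear_combination h + (247 * X) * h7Z

lemma X2P : X ^ 2 * P7 = P7 ^ 49 * (QQ ^ 3 - 1) ^ 2 := by
  have : (X : Z7) ^ 2 = (-X)^2 := by ring
  rw [this, ← D_eq]; ring

lemma coeff_seven_pow (f : Z7) (m : ℕ) : coeff (7 * m) (f ^ 7) = coeff m f := by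
  have h := MvPowerSeries.map_frobenius_expand (σ := Unit) (R := ZMod 7) (p := 7) (f := f) (hp := by norm_num)
  rw [← h, ZMod.frobenius_zmod]
  have h2 := PowerSeries.coeff_expand_mul (R := ZMod 7) 7 (by norm_num) f m
  rw [← h2]
  have h3 : coeff (7*m) ((PowerSeries.map (RingHom.id (ZMod 7))) (PowerSeries.expand 7 (by norm_num) f)) = coeff (7*m) (PowerSeries.expand 7 (by norm_num) f) := by simp
  exact h3

lemma coeff_thP_mul (f : Z7) (m : ℕ) (h : 7 ∣ m) : coeff m (thP f) = 0 := by
  rw [coeff_thP, (ZMod.natCast_eq_zero_iff m 7).mpr h, zero_mul]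

lemma thP_pow49 (f : Z7) : thP (f ^ 49) = 0 := by
  rw [thP_pow]; push_cast; linear_combination (7 * f^48 * thP f) * h7Z
lemma thP_pow7 (f : Z7) : thP (f ^ 7) = 0 := by
  rw [thP_pow]; push_cast; linear_combination (f^6 * thP f) * h7Z

lemma p_five (n : ℕ) (hn : n % 7 = 5) : coeff n P7 = 0 := by
  have h : (QQ ^ 3 - 1) ^ 2 = thP (-3 * QQ + 6 * QQ ^ 4) := by
    simp only [thP_add, thP_mul, thP_neg, thP_ofNat, thP_pow, QQ_th]
    push_cast
    linear_combination (-2 + 19*QQ^3 + -17*QQ^6) * h7Z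
  rw [← coeff_X_pow_mul P7 2 n, X2P, h]
  have h2 : P7 ^ 49 * thP (-3 * QQ + 6 * QQ ^ 4) = thP (P7^49 * (-3 * QQ + 6 * QQ ^ 4)) := by
    rw [thP_mul (P7^49), thP_pow49]; ring
  rw [h2]
  exact coeff_thP_mul _ _ (by omega)

lemma th5 : thP (thP (thP (thP (thP (m7 (Phi 1)))))) = 3 + 5*QQ^3 + 6*QQ^6 + 4*QQ^9 + 3*QQ^12 := by
  have e1 : thP (m7 (Phi 1)) = QQ + 6*QQ^4 := by
    rw [phi1_eq]
    simp only [thP_add, thP_sub, thP_one, thP_mul, thP_neg, thP_ofNat, thP_pow, QQ_th]; push_cast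
    linear_combination (-3*QQ^1 + 2*QQ^4) * h7Z
  have e2 : thP (QQ + 6*QQ^4) = 2 + 4*QQ^3 + QQ^6 := by
    simp only [thP_add, thP_sub, thP_one, thP_mul, thP_neg, thP_ofNat, thP_pow, QQ_th]; push_cast
    linear_combination (-1*QQ^0 + -17*QQ^3 + 17*QQ^6) * h7Z
  have e3 : thP (2 + 4*QQ^3 + QQ^6) = 3*QQ^2 + 2*QQ^5 + 2*QQ^8 := by
    simp only [thP_add, thP_sub, thP_one, thP_mul, thP_neg, thP_ofNat, thP_pow, QQ_th]; push_cast
    linear_combination (-9*QQ^2 + 4*QQ^5 + 4*QQ^8) * h7Z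
  have e4 : thP (3*QQ^2 + 2*QQ^5 + 2*QQ^8) = 5*QQ + QQ^4 + 5*QQ^7 + 3*QQ^10 := by
    simp only [thP_add, thP_sub, thP_one, thP_mul, thP_neg, thP_ofNat, thP_pow, QQ_th]; push_cast
    linear_combination (-5*QQ^1 + -3*QQ^4 + -5*QQ^7 + 11*QQ^10) * h7Z
  have e5 : thP (5*QQ + QQ^4 + 5*QQ^7 + 3*QQ^10) = 3 + 5*QQ^3 + 6*QQ^6 + 4*QQ^9 + 3*QQ^12 := by
    simp only [thP_add, thP_sub, thP_one, thP_mul, thP_neg, thP_ofNat, thP_pow, QQ_th]; push_cast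
    linear_combination (-4*QQ^0 + -23*QQ^6 + 3*QQ^9 + 21*QQ^12) * h7Z
  rw [e1, e2, e3, e4, e5]

lemma phi5_coeff (n : ℕ) (hn : ¬ 7 ∣ n) : coeff n (m7 (Phi 5)) = coeff n (thP (thP (thP (thP (thP (m7 (Phi 1))))))) := by
  simp only [coeff_thP, coeff_m7, Phi, coeff_mk, ArithmeticFunction.sigma_apply]
  rw [← Nat.sum_div_divisors n (fun d => d ^ 1)]
  simp only [Nat.cast_sum, Int.cast_sum, Nat.cast_pow, Int.cast_pow, Int.cast_natCast]
  simp only [Finset.mul_sum]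
  refine Finset.sum_congr rfl fun d hd => ?_
  obtain ⟨hd1, hn0⟩ := Nat.mem_divisors.mp hd
  obtain ⟨e, rfl⟩ := hd1
  have hd0 : 0 < d := Nat.pos_of_mem_divisors hd
  rw [Nat.mul_div_cancel_left e hd0]
  push_cast
  have he : (e : ZMod 7) ≠ 0 := by
    intro h
    exact hn (((ZMod.natCast_eq_zero_iff e 7).mp h).mul_left d)
  have := ZMod.pow_card_sub_one_eq_one he
  simp only [Nat.reduceSub] at this
  linear_combination (-(d:ZMod 7)^5) * this

lemma c_phi5 (n : ℕ) (hn : n % 7 = 5) : coeff n (P7 * m7 (Phi 5)) = coeff n (P7 * thP (thP (thP (thP (thP (m7 (Phi 1))))))) := by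
  rw [coeff_mul, coeff_mul]
  refine Finset.sum_congr rfl fun ij hij => ?_
  have hij' := Finset.HasAntidiagonal.mem_antidiagonal.mp hij
  by_cases h : 7 ∣ ij.2
  · rw [p_five ij.1 (by omega)]; simp
  · rw [phi5_coeff _ h]

lemma stepE (k : ℕ) : coeff (49*k+47) (P7 * (3 * m7 (Phi 5) + m7 (Phi 3)^2 + m7 (Phi 1)^2 * m7 (Phi 3)
    + 3 * m7 (Phi 1)^4 + m7 (Phi 1) * m7 (Phi 3) - m7 (Phi 1)^3)) = 0 := by
  have h5 := c_phi5 (49*k+47) (by omega)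
  set n := 49*k+47 with hn
  set T := thP (thP (thP (thP (thP (m7 (Phi 1)))))) with hT
  have e1 : P7 * (3 * m7 (Phi 5) + m7 (Phi 3)^2 + m7 (Phi 1)^2 * m7 (Phi 3)
    + 3 * m7 (Phi 1)^4 + m7 (Phi 1) * m7 (Phi 3) - m7 (Phi 1)^3) = C 3 * (P7 * m7 (Phi 5)) + P7 * (m7 (Phi 3)^2 + m7 (Phi 1)^2 * m7 (Phi 3)
    + 3 * m7 (Phi 1)^4 + m7 (Phi 1) * m7 (Phi 3) - m7 (Phi 1)^3) := by
    rw [show (C (3: ZMod 7) : Z7) = 3 from map_ofNat (C (R := ZMod 7)) 3]; ring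
  rw [e1, map_add, coeff_C_mul, h5, ← coeff_C_mul, ← map_add, hT, th5, phi3_eq, phi1_eq,
    ← coeff_X_pow_mul _ 2 n]
  set Y : Z7 := 4*QQ + QQ^2 + QQ^3 + 4*QQ^5 + 2*QQ^6 + 6*QQ^8 + QQ^9 + 4*QQ^10 + 5*QQ^12 + 6*QQ^13 + 6*QQ^16 + 4*QQ^19 with hY
  have e2 : thP Y = (4 + 2*QQ + 3*QQ^2 + 20*QQ^4 + 12*QQ^5 + 48*QQ^7 + 9*QQ^8 + 40*QQ^9 + 60*QQ^11 + 78*QQ^12 + 96*QQ^15 + 76*QQ^18) * (5 * (QQ^3-1)) := by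
    rw [hY]
    simp only [thP_add, thP_sub, thP_one, thP_mul, thP_neg, thP_ofNat, thP_pow, QQ_th]; push_cast
    ring
  have e3 : thP (P7^49 * Y) = P7^49 * thP Y := by rw [thP_mul, thP_pow49]; ring
  have e4 : thP (P7^7 * (3 * QQ)) = P7^7 * (QQ^3-1) := by
    rw [thP_mul, thP_pow7, thP_mul, thP_ofNat, QQ_th]
    linear_combination (2 * P7^7 * (QQ^3-1)) * h7Z
  have e6 : X ^ 2 * (C 3 * (P7 * (3 + 5 * QQ ^ 3 + 6 * QQ ^ 6 + 4 * QQ ^ 9 + 3 * QQ ^ 12)) +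
        P7 * ((4 * (QQ - 1)) ^ 2 + (2 * (QQ ^ 2 - 1)) ^ 2 * (4 * (QQ - 1)) + 3 * (2 * (QQ ^ 2 - 1)) ^ 4 +
            2 * (QQ ^ 2 - 1) * (4 * (QQ - 1)) - (2 * (QQ ^ 2 - 1)) ^ 3)) = thP (P7^49 * Y) + C 5 * (thP (P7^7 * (3 * QQ)))^7 := by
    rw [show (C (3: ZMod 7) : Z7) = 3 from map_ofNat (C (R := ZMod 7)) 3, show (C (5: ZMod 7) : Z7) = 5 from map_ofNat (C (R := ZMod 7)) 5, e4, e3, e2]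
    linear_combination (3 * (3 + 5 * QQ ^ 3 + 6 * QQ ^ 6 + 4 * QQ ^ 9 + 3 * QQ ^ 12) +
         ((4 * (QQ - 1)) ^ 2 + (2 * (QQ ^ 2 - 1)) ^ 2 * (4 * (QQ - 1)) + 3 * (2 * (QQ ^ 2 - 1)) ^ 4 +
            2 * (QQ ^ 2 - 1) * (4 * (QQ - 1)) - (2 * (QQ ^ 2 - 1)) ^ 3)) * X2P + P7^49 * (14*QQ^0 + -2*QQ^1 + -23*QQ^2 + -30*QQ^3 + 62*QQ^4 + 59*QQ^5 + 2*QQ^6 + -68*QQ^7 + -25*QQ^8 + 56*QQ^9 + 8*QQ^10 + 25*QQ^11 + 24*QQ^12 + -36*QQ^14 + -3*QQ^15 + -8*QQ^18 + -55*QQ^21) * h7Z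
  rw [e6, map_add, coeff_C_mul, coeff_thP_mul _ _ (by omega), show n + 2 = 7 * (7 * (k+1)) by omega, coeff_seven_pow,
    coeff_thP_mul _ _ (by omega)]
  simp

lemma m7_zero_dvd (n : ℕ) (p : PowerSeries ℤ) (h : coeff n (m7 p) = 0) : (7:ℤ) ∣ coeff n p := by
  rw [coeff_m7] at h
  exact (ZMod.intCast_zmod_eq_zero_iff_dvd _ 7).mp h

lemma coeff_ofNat_mul (n k : ℕ) [k.AtLeastTwo] (p : PowerSeries ℤ) : coeff n (ofNat(k) * p) = ofNat(k) * coeff n p := by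
  have : (ofNat(k) : PowerSeries ℤ) = C (ofNat(k) : ℤ) := by simp
  rw [this, coeff_C_mul]

lemma arith_fin (N t a7 a5 a1 a15 a33 a113 a1111 a13 a111 b u v e : ℤ)
 (hE : 3 * a5 + a33 + a113 + 3 * a1111 + a13 - a111 = 7 * e)
 (ht : 14 * N = -(24 * a7) - 4032 * a15 - 5040 * a33 - 181440 * a113 - 544320 * a1111 + 42 * a5 + 3780 * a13 + 22680 * a111 - 18 * a1 + 49 * t)
 (hD : 49 * u =  -(7 * b) - 264 * a1 - 5544 * a5 + 133056 * a15 - 5760 * a7)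
 (h1 : a1 = 49 * v + 35 * b) : 7 ∣ N := by
  have h2 : 240 * (14 * N) - 49 * u = 240 * (- 4032 * a15 - 5040 * a33 - 181440 * a113 - 544320 * a1111 + 42 * a5 + 3780 * a13 + 22680 * a111 - 18 * a1 + 49 * t) - ( -(7 * b) - 264 * a1 - 5544 * a5 + 133056 * a15) := by linarith
  subst h1
  have : a33 = 7 * e - 3 * a5 - a113 - 3 * a1111 - a13 + a111 := by linarith
  subst this
  clear hE ht hD
  omega

theorem final_step (k : ℕ) (N : ℤ) (h : ∃ t, 14 * N = coeff (49*k+47) (PP * (-24 * Phi 7 - 4032 * (Phi 1 * Phi 5)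
   - 5040 * Phi 3 ^2 - 181440 * (Phi 1^2 * Phi 3) - 544320 * Phi 1 ^ 4 + 42 * Phi 5 + 3780 * (Phi 1 * Phi 3)
   + 22680 * Phi 1 ^3 - 18 * Phi 1)) + 49 * t) : (7 : ℤ) ∣ N := by
  obtain ⟨t, ht⟩ := h
  have h0 : (7:ℤ) ∣ coeff (49*k+47) PP := m7_zero_dvd _ _ (p_five _ (by omega))
  have hE : (7:ℤ) ∣ coeff (49*k+47) (PP * (3 * Phi 5 + Phi 3^2 + Phi 1^2 * Phi 3
    + 3 * Phi 1^4 + Phi 1 * Phi 3 - Phi 1^3)) := by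
    apply m7_zero_dvd
    rw [← stepE k]
    simp only [map_pow, map_add, map_mul, map_one, ofNat_map, map_sub, P7]
  have h1 : coeff (49*k+47) (PP * Phi 1) = (49*k+47 : ℕ) * coeff (49*k+47) PP := by rw [← thPP, coeff_thP]
  have hD : (24 * ((49*k+47 : ℕ) : ℤ) - 1) * coeff (49*k+47) (PP * (1 - 504 * Phi 5)) = coeff (49*k+47) (PP * (-1 - 264 * Phi 1
     - 5544 * Phi 5 + 133056 * (Phi 1 * Phi 5) - 5760 * Phi 7)) := by
    have : PP * (-1 - 264 * Phi 1 - 5544 * Phi 5 + 133056 * (Phi 1 * Phi 5) - 5760 * Phi 7) =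
      24 * thP (PP * (1 - 504 * Phi 5)) - PP * (1 - 504 * Phi 5) := by
      rw [thP_mul, thPP]
      linear_combination -12 * PP * ram_a
    rw [this, map_sub, coeff_ofNat_mul, coeff_thP]; ring
  simp only [mul_add, mul_sub, mul_neg, mul_one, neg_mul, map_add, map_sub, map_neg, mul_left_comm PP, coeff_ofNat_mul] at ht hE hD
  generalize coeff (49*k+47) (PP * Phi 7) = a7 at *
  generalize coeff (49*k+47) (PP * Phi 5) = a5 at *
  generalize coeff (49*k+47) (PP * Phi 1) = a1 at *
  generalize coeff (49*k+47) PP = a0 at *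
  obtain ⟨b, rfl⟩ := h0
  push_cast at h1 hD
  have h1' : a1 = 49 * (7 * k * b + 6 * b) + 35 * b := by rw [h1]; ring
  have hD' : (24 * (49*(k:ℤ)+47) - 1) * (7*b) - (24 * (49*(k:ℤ)+47) - 1) * (504 * a5) = 49 * ((24*k+23)* (7*b) - 504 * ((24*k+23) * a5)) := by ring
  rw [hD'] at hD
  generalize (24*(k:ℤ)+23)* (7*b) - 504 * ((24*k+23) * a5) = u at *
  generalize 7 * (k:ℤ) * b + 6 * b = v at *
  obtain ⟨e, hE⟩ := hE
  exact arith_fin N t a7 a5 a1 _ _ _ _ _ _ b u v e hE ht hD h1'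
end

noncomputable section
open PowerSeries
def mK (M : Multiset ℕ) : Multiset ℕ := (M.map Nat.pred).filter (fun x => x ≠ 0)
def mF (r : ℤ) (M : Multiset ℕ) : Multiset ℕ :=
  mK M + ({((M.card : ℤ) + r).toNat} : Multiset ℕ).filter (fun x => x ≠ 0)
def mH (r : ℤ) (M : Multiset ℕ) : Multiset ℕ :=
  (M.erase M.sup).map Nat.succ + Multiset.replicate ((M.sup : ℤ) - r - (M.erase M.sup).card).toNat 1

lemma mK_cons (a : ℕ) (M : Multiset ℕ) : mK (a ::ₘ M) = (if a - 1 ≠ 0 then {a-1} else 0) + mK M := by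
  unfold mK
  rw [Multiset.map_cons, Multiset.filter_cons]; rfl

lemma mK_card_le (M : Multiset ℕ) : (mK M).card ≤ M.card := by
  unfold mK
  exact (Multiset.card_le_card (Multiset.filter_le _ _)).trans (by simp)

lemma mK_rec (M : Multiset ℕ) (h : ∀ x ∈ M, 0 < x) :
    (mK M).map Nat.succ + Multiset.replicate (M.card - (mK M).card) 1 = M := by
  induction M using Multiset.induction with
  | empty => simp [mK]
  | cons a M ih =>
    have ih := ih (fun x hx => h x (Multiset.mem_cons_of_mem hx))
    have ha := h a (Multiset.mem_cons_self a M)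
    have hc := mK_card_le M
    rw [mK_cons]
    split_ifs with h1
    · rw [Multiset.map_add, Multiset.card_cons, Multiset.card_add]
      conv_rhs => rw [← ih]
      simp only [Multiset.map_singleton, Multiset.card_singleton]
      rw [show (a-1).succ = a by omega, show M.card + 1 - (1 + (mK M).card) = M.card - (mK M).card by omega, ← Multiset.singleton_add]
      rw [add_assoc]
    · rw [zero_add, Multiset.card_cons]
      conv_rhs => rw [← ih]
      have : a = 1 := by omega
      subst this
      rw [show M.card + 1 - ((mK M).card) = (M.card - (mK M).card) + 1 by omega, Multiset.replicate_succ]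
      simp

lemma mK_sum (M : Multiset ℕ) (h : ∀ x ∈ M, 0 < x) : (mK M).sum + M.card = M.sum := by
  have h1 := congrArg Multiset.sum (mK_rec M h)
  have hc := mK_card_le M
  rw [Multiset.sum_add, Multiset.sum_replicate] at h1
  have h2 : ((mK M).map Nat.succ).sum = (mK M).sum + (mK M).card := by
    have := Multiset.sum_map_add (m := mK M) (f := fun x => x) (g := fun _ => 1)
    simpa using this
  simp at h1
  simp at h2
  omega

lemma mK_mem (M : Multiset ℕ) (y : ℕ) (hy : y ∈ mK M) : 0 < y ∧ y + 1 ∈ M := by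
  unfold mK at hy
  rw [Multiset.mem_filter, Multiset.mem_map] at hy
  obtain ⟨⟨x, hx, rfl⟩, h0⟩ := hy
  have : x.pred = x - 1 := rfl
  refine ⟨by omega, ?_⟩
  rw [this, Nat.sub_add_cancel (by omega)]; exact hx

lemma sup_mem (M : Multiset ℕ) (h : M ≠ 0) : M.sup ∈ M := by
  induction M using Multiset.induction with
  | empty => exact absurd rfl h
  | cons a M ih =>
    rw [Multiset.sup_cons]
    by_cases hM : M = 0
    · subst hM; simp
    · rcases le_total a M.sup with h1 | h1
      · rw [sup_eq_right.mpr h1]; exact Multiset.mem_cons_of_mem (ih hM)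
      · rw [sup_eq_left.mpr h1]; exact Multiset.mem_cons_self _ _

lemma card_add_r (r : ℤ) (M : Multiset ℕ) (h : ∀ x ∈ M, 0 < x) (hr : 0 ≤ r ∨ M ≠ 0)
    (hrk : (M.sup : ℤ) - M.card ≤ r + 1) : 0 ≤ (M.card : ℤ) + r := by
  rcases hr with hr | hr
  · omega
  · have := h _ (sup_mem M hr)
    omega

lemma mF_sup (r : ℤ) (M : Multiset ℕ) (h : ∀ x ∈ M, 0 < x) (hr : 0 ≤ r ∨ M ≠ 0)
    (hrk : (M.sup : ℤ) - M.card ≤ r + 1) : (mF r M).sup = ((M.card : ℤ) + r).toNat ∧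
      (mF r M).erase ((M.card : ℤ) + r).toNat = mK M := by
  have h0 := card_add_r r M h hr hrk
  unfold mF
  set t := ((M.card : ℤ) + r).toNat with ht
  have hle : ∀ y ∈ mK M, y ≤ t := by
    intro y hy
    have := Multiset.le_sup (mK_mem M y hy).2
    omega
  by_cases h1 : t = 0
  · have : mK M = 0 := by
      rw [Multiset.eq_zero_iff_forall_notMem]
      intro y hy
      have := hle y hy
      have := (mK_mem M y hy).1
      omega
    rw [this]; simp [h1, Multiset.filter_singleton]
  · rw [Multiset.filter_singleton, if_pos h1, Multiset.add_comm, Multiset.singleton_add]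
    refine ⟨?_, Multiset.erase_cons_head _ _⟩
    rw [Multiset.sup_cons]
    exact sup_eq_left.mpr (Multiset.sup_le.mpr hle)

lemma mF_sum (r : ℤ) (M : Multiset ℕ) (h : ∀ x ∈ M, 0 < x) (hr : 0 ≤ r ∨ M ≠ 0)
    (hrk : (M.sup : ℤ) - M.card ≤ r + 1) : ((mF r M).sum : ℤ) = M.sum + r := by
  have h0 := card_add_r r M h hr hrk
  have h1 := mK_sum M h
  have h2 : (({((M.card : ℤ) + r).toNat} : Multiset ℕ).filter (fun x => x ≠ 0)).sum = ((M.card : ℤ) + r).toNat := by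
    rw [Multiset.filter_singleton]
    split_ifs with h3
    · simp
    · simp; omega
  unfold mF
  rw [Multiset.sum_add, h2]
  omega

lemma mF_rank (r : ℤ) (M : Multiset ℕ) (h : ∀ x ∈ M, 0 < x) (hr : 0 ≤ r ∨ M ≠ 0)
    (hrk : (M.sup : ℤ) - M.card ≤ r + 1) : r - 1 ≤ ((mF r M).sup : ℤ) - (mF r M).card := by
  have h0 := card_add_r r M h hr hrk
  rw [(mF_sup r M h hr hrk).1]
  have : (mF r M).card ≤ M.card + 1 := by
    unfold mF
    rw [Multiset.card_add]
    have := mK_card_le M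
    have h2 : (({((M.card : ℤ) + r).toNat} : Multiset ℕ).filter (fun x => x ≠ 0)).card ≤ 1 :=
      (Multiset.card_le_card (Multiset.filter_le _ _)).trans (by simp)
    omega
  omega

lemma mF_pos (r : ℤ) (M : Multiset ℕ) : ∀ x ∈ mF r M, 0 < x := by
  intro x hx
  unfold mF at hx
  rw [Multiset.mem_add] at hx
  rcases hx with hx | hx
  · exact (mK_mem M x hx).1
  · have := (Multiset.mem_filter.mp hx).2; omega

lemma mH_mF (r : ℤ) (M : Multiset ℕ) (h : ∀ x ∈ M, 0 < x) (hr : 0 ≤ r ∨ M ≠ 0)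
    (hrk : (M.sup : ℤ) - M.card ≤ r + 1) : mH r (mF r M) = M := by
  have h0 := card_add_r r M h hr hrk
  obtain ⟨h1, h2⟩ := mF_sup r M h hr hrk
  unfold mH
  rw [h1, h2]
  conv_rhs => rw [← mK_rec M h]
  congr 2
  have := mK_card_le M
  omega

lemma mH_j (r : ℤ) (M : Multiset ℕ) (hr : r ≤ M.sum) (hrk : r - 1 ≤ (M.sup : ℤ) - M.card) :
    0 ≤ (M.sup : ℤ) - r - (M.erase M.sup).card := by
  by_cases h : M = 0
  · subst h; simp at hr ⊢; omega
  · rw [Multiset.card_erase_of_mem (sup_mem M h)]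
    have := Multiset.card_pos.mpr h
    rw [Nat.pred_eq_sub_one]
    omega

lemma mH_card (r : ℤ) (M : Multiset ℕ) (hr : r ≤ M.sum) (hrk : r - 1 ≤ (M.sup : ℤ) - M.card) :
    ((mH r M).card : ℤ) = M.sup - r := by
  have := mH_j r M hr hrk
  unfold mH
  rw [Multiset.card_add, Multiset.card_map, Multiset.card_replicate]
  omega

lemma mK_mH (r : ℤ) (M : Multiset ℕ) (h : ∀ x ∈ M, 0 < x) : mK (mH r M) = M.erase M.sup := by
  unfold mK mH
  rw [Multiset.map_add, Multiset.map_map, Multiset.map_replicate, Multiset.filter_add]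
  have h1 : ((M.erase M.sup).map (Nat.pred ∘ Nat.succ)) = M.erase M.sup := by
    conv_rhs => rw [← Multiset.map_id (M.erase M.sup)]
    rfl
  rw [h1, Multiset.filter_eq_self.mpr (fun x hx => (h x (Multiset.mem_of_mem_erase hx)).ne')]
  rw [Multiset.filter_eq_nil.mpr]
  · simp
  · intro a ha
    have := Multiset.eq_of_mem_replicate ha
    simp [this]

lemma mF_mH (r : ℤ) (M : Multiset ℕ) (h : ∀ x ∈ M, 0 < x) (hr : r ≤ M.sum) (hrk : r - 1 ≤ (M.sup : ℤ) - M.card) :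
    mF r (mH r M) = M := by
  have h1 := mH_card r M hr hrk
  unfold mF
  rw [mK_mH r M h, h1, show ((M.sup : ℤ) - r + r).toNat = M.sup by omega, Multiset.filter_singleton]
  by_cases h0 : M = 0
  · subst h0; simp
  · have := h _ (sup_mem M h0)
    rw [if_pos (by omega), Multiset.add_comm, Multiset.singleton_add, Multiset.cons_erase (sup_mem M h0)]

lemma mH_pos (r : ℤ) (M : Multiset ℕ) : ∀ x ∈ mH r M, 0 < x := by
  intro x hx
  unfold mH at hx
  rw [Multiset.mem_add] at hx
  rcases hx with hx | hx
  · obtain ⟨y, _, rfl⟩ := Multiset.mem_map.mp hx; omega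
  · have := Multiset.eq_of_mem_replicate hx; omega

lemma mH_rank (r : ℤ) (M : Multiset ℕ) (hr : r ≤ M.sum) (hrk : r - 1 ≤ (M.sup : ℤ) - M.card) :
    ((mH r M).sup : ℤ) - (mH r M).card ≤ r + 1 := by
  rw [mH_card r M hr hrk]
  have : (mH r M).sup ≤ M.sup + 1 := by
    rw [Multiset.sup_le]
    intro x hx
    unfold mH at hx
    rw [Multiset.mem_add] at hx
    rcases hx with hx | hx
    · obtain ⟨y, hy, rfl⟩ := Multiset.mem_map.mp hx
      have := Multiset.le_sup (Multiset.mem_of_mem_erase hy)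
      omega
    · have := Multiset.eq_of_mem_replicate hx; omega
  omega

lemma mH_sum (r : ℤ) (M : Multiset ℕ) (h : ∀ x ∈ M, 0 < x) (hr : r ≤ M.sum) (hrk : r - 1 ≤ (M.sup : ℤ) - M.card) :
    ((mH r M).sum : ℤ) = M.sum - r := by
  have h1 := mK_sum (mH r M) (mH_pos r M)
  have h2 := mH_card r M hr hrk
  rw [mK_mH r M h] at h1
  have h3 : (M.erase M.sup).sum + M.sup = M.sum := by
    by_cases h0 : M = 0
    · subst h0; simp
    · conv_rhs => rw [← Multiset.cons_erase (sup_mem M h0), Multiset.sum_cons]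
      omega
  omega
end

noncomputable section
open PowerSeries
/-- count of partitions of n whose rank satisfies p -/
def rc (n : ℕ) (p : ℤ → Prop) : ℕ := Nat.card {P : Nat.Partition n // p (partitionRank P)}

lemma rank_bij (n n' : ℕ) (r : ℤ) (hn : (n' : ℤ) = n + r) (h1 : 0 ≤ r ∨ 0 < n) :
    rc n (fun x => x ≤ r + 1) = rc n' (fun x => r - 1 ≤ x) := by
  classical
  unfold rc
  have hne : ∀ P : Nat.Partition n, 0 ≤ r ∨ P.parts ≠ 0 := by
    intro P
    rcases h1 with h1 | h1
    · exact Or.inl h1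
    · right; intro h
      have := P.parts_sum
      rw [h] at this; simp at this; omega
  have hle : ∀ P : Nat.Partition n', r ≤ P.parts.sum := by
    intro P; rw [P.parts_sum]; omega
  refine Nat.card_congr
    { toFun := fun P => ⟨⟨mF r P.1.parts, fun {i} hi => mF_pos r _ i hi, ?_⟩, ?_⟩
      invFun := fun P => ⟨⟨mH r P.1.parts, fun {i} hi => mH_pos r _ i hi, ?_⟩, ?_⟩
      left_inv := ?_
      right_inv := ?_ }
  · have := mF_sum r P.1.parts (fun x hx => P.1.parts_pos hx) (hne P.1) P.2
    rw [P.1.parts_sum] at this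
    omega
  · exact mF_rank r P.1.parts (fun x hx => P.1.parts_pos hx) (hne P.1) P.2
  · have := mH_sum r P.1.parts (fun x hx => P.1.parts_pos hx) (hle P.1) P.2
    rw [P.1.parts_sum] at this
    omega
  · exact mH_rank r P.1.parts (hle P.1) P.2
  · intro P
    apply Subtype.ext
    apply Nat.Partition.ext
    exact mH_mF r P.1.parts (fun x hx => P.1.parts_pos hx) (hne P.1) P.2
  · intro P
    apply Subtype.ext
    apply Nat.Partition.ext
    exact mF_mH r P.1.parts (fun x hx => P.1.parts_pos hx) (hle P.1) P.2

lemma rank_lt (n : ℕ) (P : Nat.Partition n) : partitionRank P ≤ n - 1 ∨ n = 0 ∧ partitionRank P = 0 := by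
  unfold partitionRank
  by_cases h : P.parts = 0
  · right
    have := P.parts_sum
    rw [h] at this ⊢; simp at this ⊢; omega
  · left
    have h1 := Multiset.card_pos.mpr h
    have h2 := Multiset.single_le_sum (fun x _ => Nat.zero_le x) _ (sup_mem _ h)
    rw [P.parts_sum] at h2
    omega

lemma rank_gt (n : ℕ) (P : Nat.Partition n) : 1 - (n:ℤ) ≤ partitionRank P ∨ n = 0 ∧ partitionRank P = 0 := by
  unfold partitionRank
  by_cases h : P.parts = 0
  · right
    have := P.parts_sum
    rw [h] at this ⊢; simp at this ⊢; omega
  · left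
    have h1 := P.parts_pos (sup_mem _ h)
    have h2 : P.parts.card ≤ P.parts.sum := by
      have := Multiset.card_nsmul_le_sum (s := P.parts) (a := 1) (fun x hx => P.parts_pos hx)
      simpa using this
    rw [P.parts_sum] at h2
    omega

lemma rc_compl (n : ℕ) (p : ℤ → Prop) : (rc n p : ℤ) = Fintype.card (Nat.Partition n) - rc n (fun x => ¬ p x) := by
  classical
  unfold rc
  rw [Nat.card_eq_fintype_card, Nat.card_eq_fintype_card]
  have := Fintype.card_subtype_compl (fun P : Nat.Partition n => p (partitionRank P))
  have h2 := Fintype.card_subtype_le (fun P : Nat.Partition n => p (partitionRank P))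
  simp only at this h2 ⊢
  omega

lemma rc_zero (n : ℕ) (p : ℤ → Prop) (h : ∀ P : Nat.Partition n, ¬ p (partitionRank P)) : rc n p = 0 := by
  classical
  unfold rc
  haveI : IsEmpty {P : Nat.Partition n // p (partitionRank P)} := ⟨fun P => h P.1 P.2⟩
  exact Nat.card_of_isEmpty

lemma rc_congr (n : ℕ) (p q : ℤ → Prop) (h : ∀ x, p x ↔ q x) : rc n p = rc n q := by
  congr 1; funext x; exact propext (h x)

/-- generating function of the number of partitions with rank at least s -/
def Gs (s : ℕ) : PowerSeries ℤ := PowerSeries.mk fun n => (rc n (fun x => (s:ℤ) ≤ x) : ℤ)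
def Ls (s : ℕ) : PowerSeries ℤ := PowerSeries.mk fun n => (rc n (fun x => x ≤ -(s:ℤ)) : ℤ)

lemma Gs_rec (s : ℕ) (hs : 1 ≤ s) : Gs s = X ^ (s+1) * (PP - Gs (s+3)) := by
  ext n
  rw [coeff_X_pow_mul', Gs, coeff_mk]
  split_ifs with h
  · have h1 := rank_bij (n - (s+1)) n (s+1) (by omega) (by omega)
    have h2 := rc_compl (n - (s+1)) (fun x => x ≤ ((s:ℤ)+1) + 1)
    rw [rc_congr n _ (fun x => (s:ℤ) + 1 - 1 ≤ x) (fun x => by omega), ← h1, h2, map_sub, PP, Gs, coeff_mk, coeff_mk]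
    congr 2
    apply rc_congr
    intro x; push_cast; omega
  · rw [rc_zero]; · simp
    intro P
    have := rank_lt n P
    omega

lemma Ls_rec (s : ℕ) (hs : 1 ≤ s) : Ls s = X ^ (s+1) * (PP - Ls (s+3)) := by
  ext n
  rw [coeff_X_pow_mul', Ls, coeff_mk]
  split_ifs with h
  · have h1 := rank_bij n (n - (s+1)) (-(s+1)) (by omega) (by omega)
    have h2 := rc_compl (n - (s+1)) (fun x => -((s:ℤ)+1) - 1 ≤ x)
    rw [rc_congr n _ (fun x => x ≤ -((s:ℤ) + 1) + 1) (fun x => by omega), h1, h2, map_sub, PP, Ls, coeff_mk, coeff_mk]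
    congr 2
    apply rc_congr
    intro x; push_cast; omega
  · rw [rc_zero]; · simp
    intro P
    have := rank_gt n P
    omega

/-- uniqueness for the recursion -/
lemma rec_unique (A : ℕ → PowerSeries ℤ) (h : ∀ s, 1 ≤ s → A s = - X ^ (s+1) * A (s+3)) : ∀ s, 1 ≤ s → A s = 0 := by
  have key : ∀ n s, 1 ≤ s → coeff n (A s) = 0 := by
    intro n
    induction n using Nat.strong_induction_on with
    | _ n ih =>
      intro s hs
      rw [h s hs, neg_mul, map_neg, coeff_X_pow_mul']
      split_ifs with h1
      · rw [ih _ (by omega) _ (by omega)]; simp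
      · simp
  intro s hs
  ext n
  rw [key n s hs]; simp

lemma Ls_eq (s : ℕ) (hs : 1 ≤ s) : Ls s = Gs s := by
  have := rec_unique (fun s => Ls s - Gs s) (fun s hs => by
    show Ls s - Gs s = _
    rw [Ls_rec s hs, Gs_rec s hs]; ring) s hs
  exact sub_eq_zero.mp this

lemma rc_eq_sum (n : ℕ) (p : ℤ → Prop) [DecidablePred p] : (rc n p : ℤ) = ∑ P : Nat.Partition n, if p (partitionRank P) then 1 else 0 := by
  classical
  unfold rc
  rw [Nat.card_eq_fintype_card, Fintype.card_subtype, Finset.sum_boole]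

lemma ind_sum (n : ℕ) (x : ℤ) (h1 : x ≤ n) (h2 : -(n:ℤ) ≤ x) : (if x % 7 = 4 then (1:ℤ) else 0) =
    ∑ i ∈ Finset.range (n+1), (((if ((7*i+4 : ℕ) : ℤ) ≤ x then (1:ℤ) else 0) - (if ((7*i+5 : ℕ) : ℤ) ≤ x then (1:ℤ) else 0))
      + ((if x ≤ - ((7*i+3 : ℕ) : ℤ) then (1:ℤ) else 0) - (if x ≤ - ((7*i+4 : ℕ) : ℤ) then (1:ℤ) else 0))) := by
  have h3 : ∀ i ∈ Finset.range (n+1), (((if ((7*i+4 : ℕ) : ℤ) ≤ x then (1:ℤ) else 0) - (if ((7*i+5 : ℕ) : ℤ) ≤ x then (1:ℤ) else 0))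
      + ((if x ≤ - ((7*i+3 : ℕ) : ℤ) then (1:ℤ) else 0) - (if x ≤ - ((7*i+4 : ℕ) : ℤ) then (1:ℤ) else 0))) =
      if i = (if 0 ≤ x then x / 7 else -(x/7) - 1).toNat then (if x % 7 = 4 then (1:ℤ) else 0) else 0 := by
    intro i _
    split_ifs <;> omega
  have hm : (if 0 ≤ x then x / 7 else -(x/7) - 1).toNat ∈ Finset.range (n+1) := by
    rw [Finset.mem_range]
    split_ifs <;> omega
  rw [Finset.sum_congr rfl h3, Finset.sum_ite_eq', if_pos hm]

lemma count_mod (n : ℕ) : (rc n (fun x => x % 7 = 4) : ℤ) = ∑ i ∈ Finset.range (n+1), (coeff n (Gs (7*i+3)) - coeff n (Gs (7*i+5))) := by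
  have h : ∀ i, coeff n (Gs (7*i+3)) - coeff n (Gs (7*i+5)) = (coeff n (Gs (7*i+4)) - coeff n (Gs (7*i+5))) + (coeff n (Ls (7*i+3)) - coeff n (Ls (7*i+4))) := by
    intro i
    rw [Ls_eq _ (by omega), Ls_eq _ (by omega)]; ring
  rw [Finset.sum_congr rfl (fun i _ => h i), rc_eq_sum]
  simp only [Gs, Ls, coeff_mk, rc_eq_sum]
  simp only [← Finset.sum_sub_distrib, ← Finset.sum_add_distrib]
  rw [Finset.sum_comm]
  refine Finset.sum_congr rfl fun P _ => ?_
  have := rank_lt n P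
  have := rank_gt n P
  exact ind_sum n _ (by omega) (by omega)

lemma choose_mod (m : ℤ) : intChoose (m + 2) 6 ≡ (if m % 7 = 4 then 1 else 0) [ZMOD 7] := by
  have h1 : ((Nat.factorial 6 : ℕ) : ℤ) ∣ ∏ i ∈ Finset.range 6, (m + 2 - (i : ℤ)) := by
    have h := Ring.descPochhammer_eq_factorial_smul_choose (m + 2) 6
    have h2 : (descPochhammer ℤ 6).smeval (m+2) = ∏ i ∈ Finset.range 6, (m + 2 - (i : ℤ)) := by
      rw [← Polynomial.eval_eq_smeval, descPochhammer_eval_eq_prod_range]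
    rw [← h2, h, nsmul_eq_mul]
    exact dvd_mul_right _ _
  have h2 : ((Nat.factorial 6 : ℕ) : ℤ) * intChoose (m+2) 6 = ∏ i ∈ Finset.range 6, (m + 2 - (i : ℤ)) :=
    Int.mul_ediv_cancel' h1
  generalize intChoose (m+2) 6 = c at *
  rw [Finset.prod_range_succ, Finset.prod_range_succ, Finset.prod_range_succ, Finset.prod_range_succ, Finset.prod_range_succ, Finset.prod_range_succ, Finset.prod_range_zero] at h2
  push_cast at h2
  have h3 : (Nat.factorial 6 : ℤ) = 720 := by norm_num [Nat.factorial]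
  rw [h3] at h2
  have h4 := congrArg (Int.cast : ℤ → ZMod 7) h2
  push_cast at h4
  refine (ZMod.intCast_eq_intCast_iff _ _ 7).mp ?_
  have key : ∀ a c : ZMod 7, 720 * c = 1 * (a + 2 - 0) * (a + 2 - 1) * (a + 2 - 2) * (a + 2 - 3) * (a + 2 - 4) * (a + 2 - 5) → c = if a = 4 then 1 else 0 := by decide
  have h5 := key m c h4
  rw [h5]
  have h6 : ((m : ZMod 7) = 4) ↔ m % 7 = 4 := by
    have := ZMod.intCast_eq_intCast_iff m 4 7
    push_cast at this
    rw [this]; unfold Int.ModEq; norm_num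
  simp only [h6]
  split_ifs <;> simp

lemma eta6_sum (n : ℕ) : eta6 n = ∑ P : Nat.Partition n, intChoose (partitionRank P + 2) 6 := by
  classical
  unfold eta6
  have hr : ∀ m, rankCount m n = (Finset.univ.filter (fun P : Nat.Partition n => partitionRank P = m)).card := by
    intro m; unfold rankCount; rw [Nat.card_eq_fintype_card, Fintype.card_subtype]
  rw [finsum_eq_sum_of_support_subset (s := Finset.univ.image (fun P : Nat.Partition n => partitionRank P))]
  · rw [← Finset.sum_fiberwise_of_maps_to (s := Finset.univ) (t := Finset.univ.image (fun P : Nat.Partition n => partitionRank P)) (g := fun P => partitionRank P) (fun x hx => Finset.mem_image_of_mem _ hx)]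
    refine Finset.sum_congr rfl fun m _ => ?_
    rw [hr, Finset.sum_congr rfl (g := fun _ => intChoose (m+2) 6) (fun P hP => by rw [(Finset.mem_filter.mp hP).2])]
    rw [Finset.sum_const, nsmul_eq_mul, mul_comm]
  · intro m hm
    rw [Function.mem_support, hr] at hm
    have : (Finset.univ.filter (fun P : Nat.Partition n => partitionRank P = m)).card ≠ 0 := by
      intro h; rw [h] at hm; simp at hm
    obtain ⟨P, hP⟩ := Finset.card_ne_zero.mp this
    exact Finset.mem_coe.mpr (Finset.mem_image.mpr ⟨P, Finset.mem_univ _, (Finset.mem_filter.mp hP).2⟩)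

lemma eta6_mod (n : ℕ) : eta6 n ≡ rc n (fun x => x % 7 = 4) [ZMOD 7] := by
  rw [eta6_sum, rc_eq_sum]
  exact Int.ModEq.sum fun P _ => choose_mod _
end

noncomputable section
open PowerSeries
abbrev RR := PowerSeries ℤ
/-- the series in z with coefficients 1/(q)_j -/
def bE : PowerSeries RR := PowerSeries.mk qf
def be : PowerSeries RR := rescale (X : RR) bE
def bk : PowerSeries RR := bE ^ 3
def bh : PowerSeries RR := rescale (X : RR) bk
def bSf (d : ℕ) : RR := PowerSeries.mk fun n => if d ∣ n ∧ n ≠ 0 then (1:ℤ) else 0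
def bS : PowerSeries RR := PowerSeries.mk bSf

lemma be_eq : be = (1 - X) * bE := by
  ext1 j
  rw [be, coeff_rescale, sub_mul, one_mul, map_sub]
  cases j with
  | zero => simp
  | succ j =>
    rw [coeff_succ_X_mul, bE, coeff_mk, coeff_mk]
    linear_combination -qf_succ j

lemma bh_eq3 : bh = be ^ 3 := by rw [bh, bk, map_pow, be]
lemma bh_eq : bh = (1 - X) ^ 3 * bk := by rw [bh_eq3, be_eq, bk]; ring

lemma bk_eq : bk = (PowerSeries.mk fun n => ((Nat.choose (2 + n) 2 : ℕ) : RR)) * bh := by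
  rw [bh_eq, ← mul_assoc, mk_add_choose_mul_one_sub_pow_eq_one RR 2, one_mul]

lemma bSf_eq (d : ℕ) (hd : 0 < d) : (1 - X ^ d) * bSf d = X ^ d := by
  have h := geo_mul d hd
  have : bSf d = (PowerSeries.mk fun n => if d ∣ n then (1:ℤ) else 0) - 1 := by
    ext n
    rw [bSf, coeff_mk, map_sub, coeff_mk, coeff_one]
    by_cases h0 : n = 0
    · simp [h0]
    · simp [h0]
  rw [this]
  linear_combination h

lemma bSf_zero : bSf 0 = 0 := by
  ext n; rw [bSf, coeff_mk]; simp

lemma bSf_dvd (d : ℕ) : X ^ d ∣ bSf d := by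
  rw [X_pow_dvd_iff]
  intro m hm
  rw [bSf, coeff_mk, if_neg]
  rintro ⟨h1, h2⟩
  have := Nat.le_of_dvd (by omega) h1
  omega

lemma thP_rescale (f : PowerSeries RR) : thP (rescale (X:RR) f) = rescale (X:RR) (thP f) := by
  ext1 j
  rw [coeff_thP, coeff_rescale, coeff_rescale, coeff_thP]; ring

lemma th_be : thP be = bS * be := by
  rw [← sub_eq_zero]
  set J := thP be - bS * be with hJ
  have hX : thP (X : PowerSeries RR) = X := by rw [thP_eq, derivative_X, mul_one]
  have e1 : rescale (X : RR) be = (1 - C (X:RR) * X) * be := by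
    conv_lhs => rw [be_eq]
    rw [map_mul, map_sub, map_one, rescale_X]; rfl
  set Z : PowerSeries RR := PowerSeries.mk fun d => if d = 0 then 0 else (X : RR) ^ d with hZ
  have hZ1 : (1 - C (X:RR) * X) * Z = C (X:RR) * X := by
    ext1 j
    rw [sub_mul, one_mul, map_sub, mul_assoc, coeff_C_mul, coeff_C_mul]
    rcases j with _ | _ | j
    · simp [hZ]
    · rw [coeff_succ_X_mul, hZ, coeff_mk, coeff_mk, coeff_one_X]; simp
    · rw [coeff_succ_X_mul, hZ, coeff_mk, coeff_mk, coeff_X]; simp; ring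
  have e2 : rescale (X : RR) bS = bS - Z := by
    ext1 j
    rw [coeff_rescale, map_sub, hZ, bS, coeff_mk, coeff_mk]
    by_cases h0 : j = 0
    · subst h0; simp
    · rw [if_neg h0]
      linear_combination -bSf_eq j (by omega)
  have e3 : rescale (X : RR) J = (1 - C (X:RR) * X) * J := by
    have hC : thP (C (X:RR) : PowerSeries RR) = 0 := by
      ext1 j; rw [coeff_thP, coeff_C]; by_cases h0 : j = 0
      · simp [h0]
      · simp [h0]
    rw [hJ, map_sub, map_mul, ← thP_rescale, e1, e2, thP_mul, thP_sub, thP_one, thP_mul, hX, hC]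
    linear_combination be * hZ1
  have key0 : coeff 0 J = 0 := by
    rw [hJ, map_sub, coeff_thP, coeff_zero_eq_constantCoeff_apply, coeff_zero_eq_constantCoeff_apply, map_mul,
        ← coeff_zero_eq_constantCoeff_apply bS, bS, coeff_mk, bSf_zero]; simp
  clear_value J
  have key : ∀ j, coeff j J = 0 := by
    intro j
    induction j with
    | zero => exact key0
    | succ j ih =>
      have h := congrArg (coeff (j+1)) e3
      rw [coeff_rescale, sub_mul, one_mul, map_sub, mul_assoc, coeff_C_mul, coeff_succ_X_mul, ih] at h
      have h2 : ((1:RR) - X ^ (j+1)) * coeff (j+1) J = 0 := by linear_combination -h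
      rcases mul_eq_zero.mp h2 with h3 | h3
      · exfalso
        have := geo_mul (j+1) (by omega)
        rw [h3, zero_mul] at this
        exact zero_ne_one this
      · exact h3
  ext1 j
  rw [key j]; simp

lemma th_bh : thP bh = 3 * (bS * bh) := by
  rw [bh_eq3, thP_pow, th_be]; push_cast; ring

/-- coefficients -/
def ch (j : ℕ) : RR := coeff j bh
def ck (j : ℕ) : RR := coeff j bk

lemma ch_eq (j : ℕ) : ch j = X ^ j * ck j := by rw [ch, ck, bh, coeff_rescale]
lemma ck_eq (i : ℕ) : ck i = ∑ p ∈ Finset.HasAntidiagonal.antidiagonal i, ((Nat.choose (2 + p.1) 2 : ℕ) : RR) * ch p.2 := by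
  rw [ck, bk_eq, coeff_mul]
  simp only [coeff_mk, ch]
lemma ch_th (j : ℕ) : (j : RR) * ch j = 3 * ∑ p ∈ Finset.HasAntidiagonal.antidiagonal j, bSf p.1 * ch p.2 := by
  have h := congrArg (coeff j) th_bh
  rw [coeff_thP] at h
  have h3 : (3 : PowerSeries RR) = C (3 : RR) := (map_ofNat (C (R := RR)) 3).symm
  rw [h3, coeff_C_mul, coeff_mul] at h
  simp only [bS, coeff_mk] at h
  exact h
lemma ch_dvd (j : ℕ) : X ^ j ∣ ch j := ⟨ck j, ch_eq j⟩
end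

noncomputable section
open PowerSeries
open scoped PowerSeries.WithPiTopology
lemma smg {ι : Type} (w : ι → ℕ) (hw : ∀ n, {i | w i ≤ n}.Finite) (f : ι → RR) (hf : ∀ i, X ^ (w i) ∣ f i) :
    Summable f := by
  rw [WithPiTopology.summable_iff_summable_coeff]
  intro n
  refine summable_of_hasFiniteSupport ((hw n).subset ?_)
  intro i hi
  by_contra h
  simp only [Set.mem_setOf_eq, not_le] at h
  exact hi ((X_pow_dvd_iff.mp (hf i)) n h)

lemma sm1 (f : ℕ → RR) (hf : ∀ i, X ^ i ∣ f i) : Summable f :=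
  smg (fun i => i) (fun n => Set.finite_Iic n) f hf

lemma sm2 (f : ℕ × ℕ → RR) (hf : ∀ i, X ^ (i.1 + i.2) ∣ f i) : Summable f := by
  refine smg (fun i => i.1 + i.2) (fun n => ?_) f hf
  refine ((Set.finite_Iic n).prod (Set.finite_Iic n)).subset ?_
  rintro ⟨a, b⟩ h
  simp only [Set.mem_setOf_eq] at h
  simp only [Set.mem_prod, Set.mem_Iic]
  omega

lemma sm2l (f : ℕ × ℕ → RR) (hf : ∀ i, X ^ (i.1 + i.2) ∣ f i) (a : ℕ) : Summable fun b => f (a, b) :=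
  sm1 _ fun b => dvd_trans (pow_dvd_pow _ (by simp)) (hf (a, b))

lemma tsum_prod2 (f : ℕ × ℕ → RR) (hf : ∀ i, X ^ (i.1 + i.2) ∣ f i) :
    ∑' p, f p = ∑' a, ∑' b, f (a, b) :=
  (sm2 f hf).tsum_prod' (sm2l f hf)

lemma tsum_anti (f : ℕ × ℕ → RR) (hf : ∀ i, X ^ (i.1 + i.2) ∣ f i) :
    ∑' p, f p = ∑' a, ∑ p ∈ Finset.HasAntidiagonal.antidiagonal a, f p := by
  conv_rhs => congr; ext; rw [← Finset.sum_finset_coe, ← tsum_fintype (L := .unconditional _)]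
  rw [← Finset.HasAntidiagonal.sigmaAntidiagonalEquivProd.tsum_eq (f : ℕ × ℕ → RR)]
  exact (Finset.HasAntidiagonal.sigmaAntidiagonalEquivProd.summable_iff.mpr (sm2 f hf)).tsum_sigma'
    (fun n ↦ (hasSum_fintype _).summable)

lemma tsum_mul2 (f g : ℕ → RR) (hf : ∀ i, X ^ i ∣ f i) (hg : ∀ i, X ^ i ∣ g i) :
    ∑' p : ℕ × ℕ, f p.1 * g p.2 = (∑' a, f a) * ∑' b, g b := by
  refine ((sm1 f hf).tsum_mul_tsum (sm1 g hg) (sm2 _ fun p => ?_)).symm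
  rw [pow_add]; exact mul_dvd_mul (hf _) (hg _)

lemma coeff_be (i : ℕ) : X ^ i ∣ coeff i be := by rw [be, coeff_rescale]; exact dvd_mul_right _ _

lemma sum_be : ∑' i, coeff i be = PP := by
  have hs := (sm1 _ coeff_be).hasSum.tendsto_sum_nat
  have hp : ∀ N, ∑ i ∈ Finset.range (N+1), coeff i be = qf N := by
    intro N
    induction N with
    | zero => simp [be_eq, sub_mul, bE]
    | succ N ih =>
      rw [Finset.sum_range_succ, ih, be_eq, sub_mul, one_mul, map_sub, coeff_succ_X_mul, bE, coeff_mk, coeff_mk]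
      ring
  have hs2 := hs.comp (Filter.tendsto_add_atTop_nat 1)
  refine tendsto_nhds_unique hs2 ?_
  rw [WithPiTopology.tendsto_iff_coeff_tendsto]
  intro n
  obtain ⟨N0, h0⟩ := qf_eventually n
  refine tendsto_const_nhds.congr' ?_
  filter_upwards [Filter.eventually_ge_atTop N0] with N hN
  simp only [Function.comp, hp]
  exact (h0 N hN).symm

lemma dvd_cm (f g : PowerSeries RR) (hf : ∀ i, X ^ i ∣ coeff i f) (hg : ∀ i, X ^ i ∣ coeff i g) (i : ℕ) :
    X ^ i ∣ coeff i (f * g) := by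
  rw [coeff_mul]
  refine Finset.dvd_sum fun p hp => ?_
  rw [← Finset.HasAntidiagonal.mem_antidiagonal.mp hp, pow_add]
  exact mul_dvd_mul (hf _) (hg _)

lemma sum_cm (f g : PowerSeries RR) (hf : ∀ i, X ^ i ∣ coeff i f) (hg : ∀ i, X ^ i ∣ coeff i g) :
    ∑' i, coeff i (f * g) = (∑' i, coeff i f) * ∑' i, coeff i g := by
  rw [← tsum_mul2 _ _ hf hg, tsum_anti _ fun p => by rw [pow_add]; exact mul_dvd_mul (hf _) (hg _)]
  simp only [coeff_mul]

lemma sum_ch : ∑' a, ch a = PP ^ 3 := by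
  simp only [ch, bh_eq3]
  rw [pow_succ, sum_cm _ _ (fun i => ?_) coeff_be, pow_two, sum_cm _ _ coeff_be coeff_be, sum_be]
  · ring
  · rw [pow_two]; exact dvd_cm _ _ coeff_be coeff_be i

lemma sum_bS (l : ℕ) : ∑' i : ℕ, ((i : RR) ^ l * bSf i) = Phi l := by
  apply HasSum.tsum_eq
  rw [WithPiTopology.hasSum_iff_hasSum_coeff]
  intro n
  have e : ∀ i : ℕ, coeff n ((i : RR) ^ l * bSf i) = (if i ∣ n ∧ n ≠ 0 then (i : ℤ) ^ l else 0) := by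
    intro i
    have : ((i : RR)) ^ l = C (((i:ℤ)) ^ l) := by simp
    rw [this, coeff_C_mul, bSf, coeff_mk]; simp
  simp only [e]
  have : coeff n (Phi l) = ∑ i ∈ n.divisors, (if i ∣ n ∧ n ≠ 0 then (i : ℤ) ^ l else 0) := by
    rw [Phi, coeff_mk, ArithmeticFunction.sigma_apply]
    push_cast
    refine Finset.sum_congr rfl fun i hi => ?_
    rw [if_pos (Nat.mem_divisors.mp hi)]
  rw [this]
  refine hasSum_sum_of_ne_finset_zero fun i hi => ?_
  rw [if_neg]
  exact fun h => hi (Nat.mem_divisors.mpr h)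

def bM (l : ℕ) : RR := ∑' a : ℕ, (a : RR) ^ l * ch a

lemma bM_zero : bM 0 = PP ^ 3 := by simp [bM, sum_ch]

lemma dvdM (l a : ℕ) : X ^ a ∣ (a : RR) ^ l * ch a := dvd_mul_of_dvd_right (ch_dvd a) _
lemma dvdS (l a : ℕ) : X ^ a ∣ (a : RR) ^ l * bSf a := dvd_mul_of_dvd_right (bSf_dvd a) _

lemma bM_succ (l : ℕ) : bM (l+1) = 3 * ∑ r ∈ Finset.range (l+1), ((l.choose r : ℕ) : RR) * (Phi r * bM (l - r)) := by
  have e1 : ∀ a : ℕ, (a : RR) ^ (l+1) * ch a =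
      ∑ p ∈ Finset.HasAntidiagonal.antidiagonal a, (3 * (((p.1 : RR) + p.2)^l * (bSf p.1 * ch p.2))) := by
    intro a
    rw [pow_succ, mul_assoc, ch_th, Finset.mul_sum, Finset.mul_sum]
    refine Finset.sum_congr rfl fun p hp => ?_
    rw [← Finset.HasAntidiagonal.mem_antidiagonal.mp hp]
    push_cast; ring
  have hd : ∀ p : ℕ × ℕ, X ^ (p.1 + p.2) ∣ bSf p.1 * ch p.2 := fun p => by
    rw [pow_add]; exact mul_dvd_mul (bSf_dvd _) (ch_dvd _)
  have hd2 : ∀ (r s : ℕ) (p : ℕ × ℕ), X ^ (p.1 + p.2) ∣ ((p.1 : RR)^r * bSf p.1) * ((p.2 : RR)^s * ch p.2) := fun r s p => by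
    rw [pow_add]; exact mul_dvd_mul (dvdS _ _) (dvdM _ _)
  rw [bM]
  simp only [e1]
  rw [← tsum_anti (fun p => (3 * (((p.1 : RR) + p.2)^l * (bSf p.1 * ch p.2))))
    (fun p => dvd_mul_of_dvd_right (dvd_mul_of_dvd_right (hd p) _) _)]
  have e2 : ∀ p : ℕ × ℕ, (3 * (((p.1 : RR) + p.2)^l * (bSf p.1 * ch p.2))) =
     ∑ r ∈ Finset.range (l+1), (3 * ((l.choose r : ℕ) : RR)) * (((p.1 : RR)^r * bSf p.1) * ((p.2 : RR)^(l-r) * ch p.2)) := by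
    intro p
    rw [add_pow, Finset.sum_mul, Finset.mul_sum]
    refine Finset.sum_congr rfl fun r hr => ?_
    ring
  simp only [e2]
  rw [Summable.tsum_finsetSum (fun r _ => sm2 _ fun p => dvd_mul_of_dvd_right (hd2 _ _ p) _), Finset.mul_sum]
  refine Finset.sum_congr rfl fun r hr => ?_
  rw [(sm2 _ (hd2 _ _)).tsum_mul_left, tsum_mul2 (fun i => (i:RR)^r * bSf i) (fun i => (i:RR)^(l-r) * ch i) (dvdS _) (dvdM _), sum_bS, ← bM]
  ring

/-- the functional -/
def bL (φ : ℤ → ℤ) : RR := ∑' p : ℕ × ℕ, ((φ ((p.1 : ℤ) - p.2) : ℤ) : RR) * (ch p.1 * ch p.2)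

lemma dvdL (φ : ℤ → ℤ) (p : ℕ × ℕ) : X ^ (p.1 + p.2) ∣ ((φ ((p.1 : ℤ) - p.2) : ℤ) : RR) * (ch p.1 * ch p.2) := by
  rw [pow_add]; exact dvd_mul_of_dvd_right (mul_dvd_mul (ch_dvd _) (ch_dvd _)) _

lemma bL_add (φ χ : ℤ → ℤ) : bL (fun m => φ m + χ m) = bL φ + bL χ := by
  rw [bL, bL, bL, ← (sm2 _ (dvdL φ)).tsum_add (sm2 _ (dvdL χ))]
  refine tsum_congr fun p => ?_
  push_cast; ring

lemma bL_smul (c : ℤ) (φ : ℤ → ℤ) : bL (fun m => c * φ m) = (c : RR) * bL φ := by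
  rw [bL, bL, ← (sm2 _ (dvdL φ)).tsum_mul_left]
  refine tsum_congr fun p => ?_
  push_cast; ring

lemma bL_sub (φ χ : ℤ → ℤ) : bL (fun m => φ m - χ m) = bL φ - bL χ := by
  have := bL_add φ (fun m => (-1) * χ m)
  rw [bL_smul] at this
  convert! this using 1
  · congr 1; ext m; ring
  · push_cast; ring

lemma bL_sum {ι : Type} (s : Finset ι) (φ : ι → ℤ → ℤ) : bL (fun m => ∑ i ∈ s, φ i m) = ∑ i ∈ s, bL (φ i) := by
  classical
  induction s using Finset.induction_on with
  | empty => simp [bL]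
  | insert a s ha ih =>
    simp only [Finset.sum_insert ha]
    rw [bL_add, ih]

lemma bL_neg (φ : ℤ → ℤ) : bL (fun m => φ (-m)) = bL φ := by
  rw [bL, bL, ← (Equiv.prodComm ℕ ℕ).tsum_eq]
  refine tsum_congr fun p => ?_
  simp only [Equiv.prodComm_apply, Prod.fst_swap, Prod.snd_swap, neg_sub]
  ring

lemma bL_pow (k : ℕ) : bL (fun m => m ^ k) =
    ∑ l ∈ Finset.range (k+1), ((k.choose l : ℕ) : RR) * ((-1)^(k-l) * (bM l * bM (k-l))) := by
  have hd2 : ∀ (r s : ℕ) (p : ℕ × ℕ), X ^ (p.1 + p.2) ∣ ((p.1 : RR)^r * ch p.1) * ((p.2 : RR)^s * ch p.2) := fun r s p => by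
    rw [pow_add]; exact mul_dvd_mul (dvdM _ _) (dvdM _ _)
  have e2 : ∀ p : ℕ × ℕ, ((((p.1 : ℤ) - p.2)^k : ℤ) : RR) * (ch p.1 * ch p.2) =
     ∑ l ∈ Finset.range (k+1), (((k.choose l : ℕ) : RR) * (-1)^(k-l)) * (((p.1 : RR)^l * ch p.1) * ((p.2 : RR)^(k-l) * ch p.2)) := by
    intro p
    push_cast
    rw [sub_eq_add_neg, add_pow, Finset.sum_mul]
    refine Finset.sum_congr rfl fun r hr => ?_
    rw [neg_pow (p.2 : RR)]
    ring
  rw [bL]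
  simp only [e2]
  rw [Summable.tsum_finsetSum (fun r _ => sm2 _ fun p => dvd_mul_of_dvd_right (hd2 _ _ p) _)]
  refine Finset.sum_congr rfl fun r hr => ?_
  rw [(sm2 _ (hd2 _ _)).tsum_mul_left, tsum_mul2 (fun i => (i:RR)^r * ch i) (fun i => (i:RR)^(k-r) * ch i) (dvdM _) (dvdM _), ← bM, ← bM]
  ring

/-- vanishing -/
lemma bL_far (φ : ℤ → ℤ) (n : ℕ) (h : ∀ m : ℤ, |m| ≤ n → φ m = 0) : X ^ (n+1) ∣ bL φ := by
  rw [X_pow_dvd_iff]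
  intro k hk
  have h1 := (WithPiTopology.hasSum_iff_hasSum_coeff ..).mp (sm2 _ (dvdL φ)).hasSum k
  rw [← bL] at h1
  refine h1.unique ?_
  convert! hasSum_zero using 2 with p
  by_cases hp : p.1 + p.2 ≤ k
  · rw [h]
    · simp
    · rw [abs_le]; constructor <;> omega
  · exact X_pow_dvd_iff.mp (dvdL φ p) k (by omega)

lemma bL_congr (c : ℤ) (φ χ : ℤ → ℤ) (n : ℕ) (h : ∀ m : ℤ, |m| ≤ n → c ∣ φ m - χ m) :
    ∃ U V : RR, bL φ = bL χ + (c : RR) * U + X ^ (n+1) * V := by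
  classical
  obtain ⟨V, hV⟩ := bL_far (fun m => if |m| ≤ n then 0 else φ m - χ m) n (fun m hm => if_pos hm)
  refine ⟨bL (fun m => if |m| ≤ n then (φ m - χ m) / c else 0), V, ?_⟩
  rw [← hV, ← bL_smul, ← bL_add, ← bL_add]
  congr 1; ext m
  by_cases hm : |m| ≤ n
  · simp only [hm, if_true]
    rw [Int.mul_ediv_cancel' (h m hm)]; ring
  · simp only [hm, if_false]; ring
end

noncomputable section
open PowerSeries
open scoped PowerSeries.WithPiTopology
section moments
lemma bM_1 : bM 1 = 3 * (Phi 0 * PP^3) := by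
  rw [bM_succ 0]; simp [Finset.sum_range_succ, bM_zero]
lemma bM_2 : bM 2 = 3 * (Phi 0 * bM 1 + Phi 1 * PP^3) := by
  rw [bM_succ 1]; simp [Finset.sum_range_succ, bM_zero]
lemma bM_3 : bM 3 = 3 * (Phi 0 * bM 2 + 2 * Phi 1 * bM 1 + Phi 2 * PP^3) := by
  rw [bM_succ 2]; congr 1; norm_num [Finset.sum_range_succ, bM_zero, Nat.choose]; ring
lemma bM_4 : bM 4 = 3 * (Phi 0 * bM 3 + 3 * Phi 1 * bM 2 + 3 * Phi 2 * bM 1 + Phi 3 * PP^3) := by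
  rw [bM_succ 3]; congr 1; norm_num [Finset.sum_range_succ, bM_zero, Nat.choose]; ring
lemma bM_5 : bM 5 = 3 * (Phi 0 * bM 4 + 4 * Phi 1 * bM 3 + 6 * Phi 2 * bM 2 + 4 * Phi 3 * bM 1 + Phi 4 * PP^3) := by
  rw [bM_succ 4]; congr 1; norm_num [Finset.sum_range_succ, bM_zero, Nat.choose]; ring
lemma bM_6 : bM 6 = 3 * (Phi 0 * bM 5 + 5 * Phi 1 * bM 4 + 10 * Phi 2 * bM 3 + 10 * Phi 3 * bM 2 + 5 * Phi 4 * bM 1 + Phi 5 * PP^3) := by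
  rw [bM_succ 5]; congr 1; norm_num [Finset.sum_range_succ, bM_zero, Nat.choose]; ring
lemma bM_7 : bM 7 = 3 * (Phi 0 * bM 6 + 6 * Phi 1 * bM 5 + 15 * Phi 2 * bM 4 + 20 * Phi 3 * bM 3 + 15 * Phi 4 * bM 2 + 6 * Phi 5 * bM 1 + Phi 6 * PP^3) := by
  rw [bM_succ 6]; congr 1; norm_num [Finset.sum_range_succ, bM_zero, Nat.choose]; ring
lemma bM_8 : bM 8 = 3 * (Phi 0 * bM 7 + 7 * Phi 1 * bM 6 + 21 * Phi 2 * bM 5 + 35 * Phi 3 * bM 4 + 35 * Phi 4 * bM 3 + 21 * Phi 5 * bM 2 + 7 * Phi 6 * bM 1 + Phi 7 * PP^3) := by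
  rw [bM_succ 7]; congr 1; norm_num [Finset.sum_range_succ, bM_zero, Nat.choose]; ring

lemma mu0 : bL (fun _ => 1) = PP ^ 6 := by
  have := bL_pow 0
  simp only [pow_zero] at this
  rw [this]; simp [bM_zero]; ring
lemma mu1 : bL (fun m => m) = 0 := by
  have := bL_pow 1
  simp only [pow_one] at this
  rw [this]; simp [Finset.sum_range_succ, bM_zero]; ring
lemma mu2 : bL (fun m => m ^ 2) = 6 * Phi 1 * PP ^ 6 := by
  rw [bL_pow]; norm_num [Finset.sum_range_succ, bM_zero, Nat.choose]
  rw [bM_2, bM_1]; ring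
lemma mu6 : bL (fun m => m ^ 6) = (6 * Phi 5 + 540 * (Phi 1 * Phi 3) + 3240 * Phi 1 ^ 3) * PP ^ 6 := by
  rw [bL_pow]; norm_num [Finset.sum_range_succ, bM_zero, Nat.choose]
  rw [bM_6, bM_5, bM_4, bM_3, bM_2, bM_1]; ring
lemma mu8 : bL (fun m => m ^ 8) = (6 * Phi 7 + 1008 * (Phi 1 * Phi 5) + 1260 * Phi 3 ^ 2 +
    45360 * (Phi 1 ^ 2 * Phi 3) + 136080 * Phi 1 ^ 4) * PP ^ 6 := by
  rw [bL_pow]; norm_num [Finset.sum_range_succ, bM_zero, Nat.choose]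
  rw [bM_8, bM_7, bM_6, bM_5, bM_4, bM_3, bM_2, bM_1]; ring
end moments

def phs (s m : ℤ) : ℤ := if s ≤ m then (m - s) * (m - s + 1) else 0
def bW (s : ℤ) : RR := bL (phs s)

lemma bW_add (s : ℤ) : bW s + bW (1 - s) = 6 * Phi 1 * PP ^ 6 + ((s * (s - 1) : ℤ) : RR) * PP ^ 6 := by
  have h1 : bW (1 - s) = bL (fun m => phs (1 - s) (-m)) := by rw [bL_neg (phs (1 - s))]; rfl
  rw [h1, bW, ← bL_add]
  have h2 : (fun m => phs s m + phs (1-s) (-m)) = fun m => (m^2 + (1 - 2*s) * m) + s*(s-1) * 1 := by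
    ext m
    unfold phs
    by_cases h : s ≤ m
    · rw [if_pos h]
      by_cases h' : 1 - s ≤ -m
      · exfalso; omega
      · rw [if_neg h']; ring
    · rw [if_neg h, if_pos (by omega)]; ring
  rw [h2, bL_add, bL_add, bL_smul, bL_smul, mu1, mu2, mu0]; ring

lemma phs_inner (s : ℤ) (a : ℕ) : ∑' b : ℕ, ((phs s ((a:ℤ) - b) : ℤ) : RR) * ch b =
    if 0 ≤ (a:ℤ) - s - 1 then 2 * ck ((a:ℤ) - s - 1).toNat else 0 := by
  split_ifs with h
  · obtain ⟨z, hz⟩ := Int.eq_ofNat_of_zero_le h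
    rw [hz, Int.toNat_natCast, tsum_eq_sum (s := Finset.range (z+1))]
    · rw [ck_eq, Finset.Nat.sum_antidiagonal_eq_sum_range_succ_mk, Finset.mul_sum, ← Finset.sum_range_reflect]
      refine Finset.sum_congr rfl fun i hi => ?_
      have hi := Finset.mem_range.mp hi
      have e1 : z + 1 - 1 - i = z - i := by omega
      have e2 : z - (z - i) = i := by omega
      simp only [e1]
      have e3 : (2 * (Nat.choose (2 + i) 2 : ℕ) : ℤ) = (i + 1) * (i + 2) := by
        have := Nat.triangle_succ (i+1)
        have h2 := Nat.choose_two_right (2 + i)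
        have h3 : 2 ∣ (2 + i) * (2 + i - 1) := (Nat.even_mul_pred_self _).two_dvd
        have h4 : 2 * Nat.choose (2+i) 2 = (2 + i) * (2 + i - 1) := by rw [h2]; exact Nat.mul_div_cancel' h3
        have h5 : 2 + i - 1 = i + 1 := by omega
        rw [h5] at h4
        zify at h4; rw [h4]; ring
      have e4 : phs s ((a:ℤ) - ((z - i : ℕ) : ℤ)) = (i + 1) * (i + 2) := by
        unfold phs
        have : ((z - i : ℕ) : ℤ) = z - i := by omega
        rw [if_pos (by omega)]
        have h6 : (a:ℤ) - ((z - i : ℕ) : ℤ) - s = i + 1 := by omega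
        rw [h6]; ring
      rw [e4, ← e3]; push_cast; ring
    · intro b hb
      have hb : z + 1 ≤ b := by simpa using hb
      have : phs s ((a:ℤ) - b) = 0 := by
        unfold phs
        split_ifs with h1
        · have : (a:ℤ) - b - s = 0 := by omega
          rw [this]; ring
        · rfl
      rw [this]; simp
  · convert! tsum_zero with b
    have : phs s ((a:ℤ) - b) = 0 := by
      unfold phs
      split_ifs with h1
      · have : (a:ℤ) - b - s = 0 := by omega
        rw [this]; ring
      · rfl
    rw [this]; simp

lemma bW_eq (s : ℤ) : bW s = ∑' a : ℕ, (if 0 ≤ (a:ℤ) - s - 1 then 2 * ck ((a:ℤ) - s - 1).toNat else 0) * ch a := by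
  rw [bW, bL, tsum_prod2 _ (dvdL _)]
  refine tsum_congr fun a => ?_
  rw [← phs_inner, ← Summable.tsum_mul_right]
  · refine tsum_congr fun b => ?_
    ring
  · exact sm1 _ fun b => dvd_mul_of_dvd_right (ch_dvd b) _

lemma bW_pos (t : ℕ) : bW ((t:ℤ) - 1) = ∑' i : ℕ, 2 * ck i * ch (i + t) := by
  rw [bW_eq, ← Summable.sum_add_tsum_nat_add t, Finset.sum_eq_zero, zero_add]
  · refine tsum_congr fun i => ?_
    rw [if_pos (by omega)]
    congr 3; omega
  · intro i hi
    have := Finset.mem_range.mp hi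
    rw [if_neg (by omega), zero_mul]
  · exact sm1 _ fun b => dvd_mul_of_dvd_right (ch_dvd b) _

lemma bW_negv (t : ℕ) : bW (-(t:ℤ) - 1) = ∑' i : ℕ, 2 * ck (i + t) * ch i := by
  rw [bW_eq]
  refine tsum_congr fun i => ?_
  rw [if_pos (by omega)]
  congr 3; omega

lemma bW_refl (t : ℕ) : bW ((t:ℤ) - 1) = X ^ t * bW (-(t:ℤ) - 1) := by
  rw [bW_pos, bW_negv, ← Summable.tsum_mul_left]
  · refine tsum_congr fun i => ?_
    rw [ch_eq, ch_eq, pow_add]; ring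
  · exact sm1 _ fun b => dvd_mul_of_dvd_right (ch_dvd b) _

lemma bW_rec (s : ℕ) : bW s = X ^ (s+1) * (6 * Phi 1 * PP ^ 6 + (((s+3) * (s + 2) : ℤ) : RR) * PP ^ 6 - bW ((s+3 : ℕ))) := by
  have h1 := bW_refl (s+1)
  have h2 := bW_add (s+3)
  have e1 : ((s + 1 : ℕ) : ℤ) - 1 = s := by omega
  have e2 : -((s + 1 : ℕ) : ℤ) - 1 = 1 - (s + 3) := by omega
  have e3 : (s : ℤ) + 3 - 1 = s + 2 := by omega
  rw [e1, e2] at h1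
  rw [e3] at h2
  rw [h1]
  push_cast at h2 ⊢
  linear_combination X ^ (s+1) * h2

def bB (s : ℕ) : RR := 6 * thP (Gs s) + ((s : RR) ^ 2 - s) * Gs s

lemma thX (k : ℕ) : thP (X ^ k : RR) = (k : RR) * X ^ k := by
  ext j
  have : (k : RR) = C (k : ℤ) := by simp
  rw [coeff_thP, this, coeff_C_mul, coeff_X_pow]
  split_ifs with h
  · simp [h]
  · simp

lemma bB_rec (s : ℕ) (hs : 1 ≤ s) : bB s = X ^ (s+1) * (6 * Phi 1 * PP + (((s+3) * (s + 2) : ℤ) : RR) * PP - bB (s+3)) := by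
  rw [bB, bB]
  have h := Gs_rec s hs
  have h2 := congrArg thP h
  rw [thP_mul, thP_sub, thX, thPP] at h2
  push_cast at h2 ⊢
  linear_combination 6 * h2 + ((s : RR) ^ 2 - s) * h

lemma bB_eq (s : ℕ) (hs : 1 ≤ s) : PP ^ 5 * bB s = bW s := by
  have := rec_unique (fun s => PP ^ 5 * bB s - bW s) (fun s hs => by
    rw [bB_rec s hs, bW_rec s]
    push_cast
    ring) s hs
  exact sub_eq_zero.mp this
end

noncomputable section
open PowerSeries
def Psi (K : ℕ) (m : ℤ) : ℤ := ∑ i ∈ Finset.range K, (phs ((7*i+3 : ℕ) : ℤ) m - phs ((7*i+5 : ℕ) : ℤ) m)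
def chi (m : ℤ) : ℤ := (-4) * m ^ 8 + 7 * m ^ 6 + (-3) * m ^ 2

lemma chi_step (m : ℤ) : (49 : ℤ) ∣ 7 * (4 * m + 14) + chi m - chi (m + 7) := by
  have key : ∀ m : ZMod 49, 7 * (4 * m + 14) + ((-4) * m ^ 8 + 7 * m ^ 6 + (-3) * m ^ 2) -
     ((-4) * (m+7) ^ 8 + 7 * (m+7) ^ 6 + (-3) * (m+7) ^ 2) = 0 := by decide +kernel
  have h := key (m : ZMod 49)
  rw [show (49 : ℤ) = ((49 : ℕ) : ℤ) from rfl, ← ZMod.intCast_zmod_eq_zero_iff_dvd]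
  rw [← h, chi, chi]
  push_cast; ring

lemma Psi_key (K : ℕ) : ∀ m : ℕ, m ≤ 7 * K + 2 → (49:ℤ) ∣ 7 * Psi K m - chi m := by
  induction K with
  | zero =>
    intro m hm
    have : m ≤ 2 := by omega
    interval_cases m <;> norm_num [Psi, chi]
  | succ K ih =>
    intro m hm
    by_cases h7 : m < 7
    · have e : Psi (K+1) m = phs 3 m - phs 5 m := by
        rw [Psi, Finset.sum_range_succ', Finset.sum_eq_zero]
        · simp
        · intro i hi
          unfold phs
          rw [if_neg (by push_cast; omega), if_neg (by push_cast; omega)]; ring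
      rw [e]
      interval_cases m <;> norm_num [phs, chi]
    · obtain ⟨k, rfl⟩ : ∃ k, m = k + 7 := ⟨m - 7, by omega⟩
      have h1 := ih k (by omega)
      have h2 := chi_step k
      have e : Psi (K+1) ((k + 7 : ℕ) : ℤ) = Psi K k + (4 * k + 14) := by
        rw [Psi, Finset.sum_range_succ']
        congr 1
        · refine Finset.sum_congr rfl fun i hi => ?_
          have sh : ∀ s m : ℤ, phs (s + 7) (m + 7) = phs s m := by
            intro s m
            unfold phs
            by_cases h : s ≤ m
            · rw [if_pos h, if_pos (by omega)]; ring
            · rw [if_neg h, if_neg (by omega)]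
          rw [← sh ((7*i+3 : ℕ) : ℤ) (k:ℤ), ← sh ((7*i+5 : ℕ) : ℤ) (k:ℤ)]
          congr 2 <;> push_cast <;> ring
        · unfold phs
          rw [if_pos (by push_cast; omega), if_pos (by push_cast; omega)]
          push_cast; ring
      rw [e]
      have h3 := dvd_add h1 h2
      convert! h3 using 1
      push_cast; ring

lemma Psi_neg (K k : ℕ) : Psi K (-(k:ℤ)) = 0 := by
  refine Finset.sum_eq_zero fun i hi => ?_
  unfold phs
  rw [if_neg (by push_cast; omega), if_neg (by push_cast; omega)]; ring

lemma Psi_even (n : ℕ) (m : ℤ) (hm : |m| ≤ n) :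
    (49:ℤ) ∣ 7 * (Psi (n+1) m + Psi (n+1) (-m)) - chi m := by
  obtain ⟨k, rfl | rfl⟩ := Int.eq_nat_or_neg m
  · rw [Psi_neg, add_zero]
    rw [abs_le] at hm
    exact Psi_key _ _ (by omega)
  · rw [neg_neg, Psi_neg, zero_add]
    rw [abs_le] at hm
    have : chi (-(k:ℤ)) = chi k := by unfold chi; ring
    rw [this]
    exact Psi_key _ _ (by omega)

def bPoly : RR := (-24 * Phi 7 - 4032 * (Phi 1 * Phi 5) - 5040 * Phi 3 ^2 - 181440 * (Phi 1^2 * Phi 3) - 544320 * Phi 1 ^ 4 + 42 * Phi 5 + 3780 * (Phi 1 * Phi 3) + 22680 * Phi 1 ^3 - 18 * Phi 1)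

lemma bL_chi : bL chi = PP ^ 6 * bPoly := by
  have : chi = fun m => (-4) * m ^ 8 + 7 * m ^ 6 + (-3) * m ^ 2 := rfl
  rw [this, bL_add, bL_add, bL_smul, bL_smul, bL_smul, mu8, mu6, mu2, bPoly]
  push_cast; ring

def bBt (n : ℕ) : RR := ∑ i ∈ Finset.range (n+1), (bB (7*i+3) - bB (7*i+5))

lemma bL_Psi (n : ℕ) : bL (Psi (n+1)) = PP ^ 5 * bBt n := by
  have : Psi (n+1) = fun m => ∑ i ∈ Finset.range (n+1), (phs ((7*i+3 : ℕ) : ℤ) m - phs ((7*i+5 : ℕ) : ℤ) m) := rfl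
  rw [this, bL_sum, bBt, Finset.mul_sum]
  refine Finset.sum_congr rfl fun i hi => ?_
  rw [bL_sub, mul_sub, bB_eq _ (by omega), bB_eq _ (by omega)]; rfl

lemma bBt_coeff (n : ℕ) : ∃ u : ℤ, 14 * coeff n (bBt n) = coeff n (PP * bPoly) + 49 * u := by
  obtain ⟨U, V, h⟩ := bL_congr 49 (fun m => 7 * (Psi (n+1) m + Psi (n+1) (-m))) chi n (Psi_even n)
  rw [bL_smul, bL_add, bL_neg, bL_Psi, bL_chi] at h
  obtain ⟨I, hI⟩ : ∃ I : RR, PP * I = 1 := ⟨invOfUnit PP 1, mul_invOfUnit PP 1 (by rw [coeff0_PP]; rfl)⟩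
  have hI5 : PP ^ 5 * I ^ 5 = 1 := by rw [← mul_pow, hI, one_pow]
  have h2 : 14 * bBt n = PP * bPoly + 49 * (U * I ^ 5) + X ^ (n+1) * (V * I ^ 5) := by
    push_cast at h
    linear_combination I ^ 5 * h + (PP * bPoly - 14 * bBt n) * hI5
  have h3 := congrArg (coeff n) h2
  rw [map_add, map_add, coeff_ofNat_mul, coeff_ofNat_mul, coeff_X_pow_mul', if_neg (by omega), add_zero] at h3
  exact ⟨_, h3⟩

lemma coeff_bB (n s : ℕ) : coeff n (bB s) = (6 * n + ((s:ℤ)^2 - s)) * coeff n (Gs s) := by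
  have : ((s : RR) ^ 2 - s) = C ((s:ℤ)^2 - s) := by simp
  rw [bB, map_add, coeff_ofNat_mul, coeff_thP, this, coeff_C_mul]
  push_cast; ring

lemma rc_div (k : ℕ) : (7:ℤ) ∣ (rc (49*k+47) (fun x => x % 7 = 4) : ℤ) := by
  apply final_step k
  obtain ⟨u, hu⟩ := bBt_coeff (49*k+47)
  have hd : (7:ℤ) ∣ (rc (49*k+47) (fun x => x % 7 = 4) : ℤ) - coeff (49*k+47) (bBt (49*k+47)) := by
    rw [count_mod, bBt, map_sum, ← Finset.sum_sub_distrib]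
    refine Finset.dvd_sum fun i hi => ?_
    rw [map_sub, coeff_bB, coeff_bB]
    refine ⟨-((6*(7*k+6)+7*i^2+5*i+5) * coeff (49*k+47) (Gs (7*i+3))) + ((6*(7*k+6)+7*i^2+9*i+7) * coeff (49*k+47) (Gs (7*i+5))), ?_⟩
    push_cast; ring
  obtain ⟨y, hy⟩ := hd
  refine ⟨u + 2 * y, ?_⟩
  have : bPoly = (-24 * Phi 7 - 4032 * (Phi 1 * Phi 5) - 5040 * Phi 3 ^2 - 181440 * (Phi 1^2 * Phi 3) - 544320 * Phi 1 ^ 4 + 42 * Phi 5 + 3780 * (Phi 1 * Phi 3) + 22680 * Phi 1 ^3 - 18 * Phi 1) := rfl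
  rw [← this]
  linear_combination 14 * hy + hu

lemma main_result (n : ℕ) : eta6 (49 * n + 47) ≡ 0 [ZMOD 7] :=
  (eta6_mod _).trans (Int.modEq_zero_iff_dvd.mpr (rc_div n))
end

/-- For every integer `n ≥ 0`, `η₆(49n+47) ≡ 0 (mod 7)`. -/
theorem eta6_49n_47_mod_7 (n : ℕ) : eta6 (49 * n + 47) ≡ 0 [ZMOD 7] := by
  exact main_result n
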